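/- The set of natural numbers representable in the form p + 2^(m₁²) + 2^(m₂²), where p is a prime and m₁, m₂ are natural numbers, has positive lower asymptotic density. Equivalently, there exists a constant c > 0 and x₀ such that for all x ≥ x₀, the number V(x) of integers n ≤ x with n = p + 2^(m₁²) + 2^(m₂²) for some prime p and naturals m₁, m₂ satisfies V(x) ≥ c·x. -/

import Mathlib

open scoped Classical

/-!
Romanoff's second moment method. Let `P` be the set of primes `p ≤ x / 2` and `T` the set of shifts
`2 ^ m₁ ^ 2 + 2 ^ m₂ ^ 2` with distinct `m₁, m₂ < √(log₂ x)`. Chebyshev's bounds give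
`|P| |T| ≍ x`, and by Cauchy–Schwarz `|P + T| * E[P, T] ≥ (|P| |T|) ^ 2`, so it suffices to bound
the additive energy `E[P, T]` by `O(x)`. Its diagonal part is `|P| |T|`. The off-diagonal part is
the sum over `t ≠ t'` in `T` of the number of prime pairs with difference `h = |t - t'|`, which the
Selberg sieve bounds by `O(x / log² x)` times `exp (4 * ∑ 1 / p)` over the odd primes `p ∣ h`.

It remains to see that this exponential is bounded on average. Ordering the primes by `ord_p(2)`
and telescoping turns it into a sum of `ord_p(2) ^ (1 / 8) / p` over `p ∣ h`. The congruence
`t ≡ t' (mod p)` prescribes one square exponent modulo `ord_p(2)` in terms of the other three, so it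
holds for a proportion `O(ord_p(2) ^ (-1 / 4))` of all pairs, and Romanoff's series
`∑ 1 / (p * ord_p(2) ^ ε)` converges.
-/

namespace Romanoff

open Finset Filter
open scoped ArithmeticFunction.Moebius ArithmeticFunction.sigma ArithmeticFunction.Omega

section SelbergSieve

open BoundingSieve

variable (s : BoundingSieve) (z : ℕ)

/-- The sum `∑ g(l)` of the Selberg terms over the divisors `l ≤ z` of the sifting range; the main
term of the Selberg sieve is the total mass divided by it. -/
noncomputable def selbergSum : ℝ :=
  ∑ l ∈ s.prodPrimes.divisors with l ≤ z, s.selbergTerms l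

/-- The optimal weights of the Λ² sieve of level `z ^ 2`. -/
noncomputable def selbergWeight (d : ℕ) : ℝ :=
  μ d * (s.nu d)⁻¹ *
    (∑ l ∈ s.prodPrimes.divisors with l ≤ z ∧ d ∣ l, s.selbergTerms l) / selbergSum s z

variable {s z}

lemma selbergTerms_pos_of_mem_divisors {l : ℕ} (hl : l ∈ s.prodPrimes.divisors) :
    0 < s.selbergTerms l :=
  selbergTerms_pos (Nat.dvd_of_mem_divisors hl)

lemma selbergSum_pos (hz : 1 ≤ z) : 0 < selbergSum s z :=
  sum_pos (fun _ hl ↦ selbergTerms_pos_of_mem_divisors (mem_of_mem_filter _ hl))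
    ⟨1, by simpa [prodPrimes_ne_zero] using hz⟩

lemma selbergWeight_one (hz : 1 ≤ z) : selbergWeight s z 1 = 1 := by
  simp only [selbergWeight, ArithmeticFunction.moebius_apply_one, Int.cast_one,
    s.nu_mult.map_one, inv_one, one_dvd, and_true, one_mul]
  exact div_self (selbergSum_pos hz).ne'

lemma selbergWeight_eq_zero_of_lt {d : ℕ} (hd : z < d) : selbergWeight s z d = 0 := by
  have hempty : {l ∈ s.prodPrimes.divisors | l ≤ z ∧ d ∣ l} = ∅ := by
    refine filter_eq_empty_iff.mpr fun l hl ⟨hlz, hdl⟩ ↦ ?_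
    exact (hlz.trans_lt hd).not_ge (Nat.le_of_dvd (Nat.pos_of_mem_divisors hl) hdl)
  simp only [selbergWeight, hempty, sum_empty, mul_zero, zero_div]

lemma abs_selbergWeight_le {d : ℕ} (hd : d ∣ s.prodPrimes) :
    |selbergWeight s z d| ≤ (s.nu d)⁻¹ := by
  have hmu : |(μ d : ℝ)| ≤ 1 := mod_cast ArithmeticFunction.abs_moebius_le_one
  have hterm (l : ℕ) (hl : l ∈ s.prodPrimes.divisors) : 0 ≤ s.selbergTerms l :=
    (selbergTerms_pos_of_mem_divisors hl).le
  have hsub : ∑ l ∈ s.prodPrimes.divisors with l ≤ z ∧ d ∣ l, s.selbergTerms l ≤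
      selbergSum s z := by
    rw [← filter_filter]
    exact sum_le_sum_of_subset_of_nonneg (filter_subset _ _) fun l hl _ ↦
      hterm l (mem_of_mem_filter _ hl)
  have hnonneg : 0 ≤ ∑ l ∈ s.prodPrimes.divisors with l ≤ z ∧ d ∣ l, s.selbergTerms l :=
    sum_nonneg fun l hl ↦ hterm l (mem_of_mem_filter _ hl)
  have hnu : 0 ≤ (s.nu d)⁻¹ := (inv_pos.mpr (nu_pos_of_dvd_prodPrimes hd)).le
  rw [selbergWeight, mul_div_assoc, abs_mul, abs_mul, abs_of_nonneg hnu,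
    abs_of_nonneg (div_nonneg hnonneg (hnonneg.trans hsub))]
  calc |(μ d : ℝ)| * (s.nu d)⁻¹ * _ ≤ 1 * (s.nu d)⁻¹ * 1 := by
        gcongr
        · exact div_nonneg hnonneg (hnonneg.trans hsub)
        · exact div_le_one_of_le₀ hsub (hnonneg.trans hsub)
    _ = (s.nu d)⁻¹ := by ring

lemma sum_moebius_dvd_dvd {l m : ℕ} (hm : Squarefree m) :
    ∑ d ∈ m.divisors with l ∣ d, μ d = if l = m then μ m else 0 := by
  by_cases hlm : l ∣ m
  · obtain ⟨k, rfl⟩ := hlm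
    have hk : k ≠ 0 := right_ne_zero_of_mul hm.ne_zero
    have hl : l ≠ 0 := left_ne_zero_of_mul hm.ne_zero
    have hdiv : {d ∈ (l * k).divisors | l ∣ d} = k.divisors.image (l * ·) := by
      ext d
      simp only [mem_filter, Nat.mem_divisors, mem_image]
      constructor
      · rintro ⟨⟨hd, -⟩, e, rfl⟩
        exact ⟨e, ⟨Nat.dvd_of_mul_dvd_mul_left (Nat.pos_of_ne_zero hl) hd, hk⟩, rfl⟩
      · rintro ⟨e, ⟨he, -⟩, rfl⟩
        exact ⟨⟨mul_dvd_mul_left l he, mul_ne_zero hl hk⟩, dvd_mul_right l e⟩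
    have hmul (e : ℕ) (he : e ∈ k.divisors) : μ (l * e) = μ l * μ e :=
      ArithmeticFunction.isMultiplicative_moebius.map_mul_of_coprime
        ((Nat.coprime_of_squarefree_mul hm).coprime_dvd_right (Nat.dvd_of_mem_divisors he))
    rw [hdiv, sum_image fun _ _ _ _ h ↦ Nat.eq_of_mul_eq_mul_left (Nat.pos_of_ne_zero hl) h,
      sum_congr rfl hmul, ← mul_sum, ← ArithmeticFunction.coe_mul_zeta_apply,
      ArithmeticFunction.moebius_mul_coe_zeta, ArithmeticFunction.one_apply]
    by_cases hk1 : k = 1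
    · simp [hk1]
    · simp [hk1, hl]
  · rw [if_neg fun h ↦ hlm h.dvd, filter_false_of_mem, sum_empty]
    exact fun d hd hld ↦ hlm (hld.trans (Nat.dvd_of_mem_divisors hd))

lemma sum_nu_mul_selbergWeight {l : ℕ} (hl : l ∈ s.prodPrimes.divisors) :
    ∑ d ∈ s.prodPrimes.divisors with l ∣ d, s.nu d * selbergWeight s z d =
      if l ≤ z then μ l * s.selbergTerms l / selbergSum s z else 0 := by
  have hmoebius (m : ℕ) (hm : m ∈ s.prodPrimes.divisors) :
      ∑ d ∈ s.prodPrimes.divisors with l ∣ d ∧ d ∣ m, (μ d : ℝ) =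
        if l = m then (μ m : ℝ) else 0 := by
    have hm' := Nat.dvd_of_mem_divisors hm
    simp_rw [and_comm (a := l ∣ _)]
    rw [← filter_filter, Nat.divisors_filter_dvd_of_dvd prodPrimes_ne_zero hm']
    exact_mod_cast sum_moebius_dvd_dvd (squarefree_of_dvd_prodPrimes hm')
  calc ∑ d ∈ s.prodPrimes.divisors with l ∣ d, s.nu d * selbergWeight s z d
      = ∑ d ∈ s.prodPrimes.divisors with l ∣ d,
          ∑ m ∈ s.prodPrimes.divisors with m ≤ z ∧ d ∣ m,
            μ d * s.selbergTerms m / selbergSum s z := by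
        refine sum_congr rfl fun d hd ↦ ?_
        have hnu : s.nu d ≠ 0 := nu_ne_zero (Nat.dvd_of_mem_divisors (mem_of_mem_filter _ hd))
        rw [selbergWeight, ← sum_div, ← mul_sum]
        field_simp
    _ = ∑ m ∈ s.prodPrimes.divisors with m ≤ z,
          (∑ d ∈ s.prodPrimes.divisors with l ∣ d ∧ d ∣ m, (μ d : ℝ)) * s.selbergTerms m /
            selbergSum s z := by
        simp_rw [sum_mul, sum_div]
        exact sum_comm' fun d m ↦ by simp only [mem_filter]; tauto
    _ = ∑ m ∈ s.prodPrimes.divisors with m ≤ z,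
          if l = m then μ l * s.selbergTerms l / selbergSum s z else 0 := by
        refine sum_congr rfl fun m hm ↦ ?_
        rw [hmoebius m (mem_of_mem_filter _ hm)]
        split_ifs with h
        · rw [h]
        · simp
    _ = _ := by simp [hl, -Nat.mem_divisors]

lemma mainSum_lambdaSquared_selbergWeight (hz : 1 ≤ z) :
    s.mainSum (lambdaSquared (selbergWeight s z)) = (selbergSum s z)⁻¹ := by
  have hS : selbergSum s z ≠ 0 := (selbergSum_pos hz).ne'
  have hdiag (l : ℕ) (hl : l ∈ s.prodPrimes.divisors) :
      (s.selbergTerms l)⁻¹ *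
          (∑ d ∈ s.prodPrimes.divisors, if l ∣ d then s.nu d * selbergWeight s z d else 0) ^ 2 =
        if l ≤ z then s.selbergTerms l / selbergSum s z ^ 2 else 0 := by
    have hg : s.selbergTerms l ≠ 0 := (selbergTerms_pos_of_mem_divisors hl).ne'
    have hmu : (μ l : ℝ) ^ 2 = 1 := mod_cast ArithmeticFunction.moebius_sq_eq_one_of_squarefree
      (squarefree_of_mem_divisors_prodPrimes hl)
    rw [← sum_filter, sum_nu_mul_selbergWeight hl]
    split_ifs
    · rw [div_pow, mul_pow, hmu]
      field_simp
    · simp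
  rw [mainSum_lambdaSquared_eq_sum_mul_sum_sq, sum_congr rfl hdiag, ← sum_filter, ← sum_div]
  change selbergSum s z / selbergSum s z ^ 2 = _
  field_simp

lemma errSum_lambdaSquared_le (w : ℕ → ℝ) :
    s.errSum (lambdaSquared w) ≤ ∑ d₁ ∈ s.prodPrimes.divisors, ∑ d₂ ∈ s.prodPrimes.divisors,
      |w d₁| * |w d₂| * |s.rem (d₁.lcm d₂)| := by
  have habs (d : ℕ) (hd : d ∈ s.prodPrimes.divisors) : |lambdaSquared w d| ≤
      ∑ d₁ ∈ s.prodPrimes.divisors, ∑ d₂ ∈ s.prodPrimes.divisors,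
        if d = d₁.lcm d₂ then |w d₁| * |w d₂| else 0 := by
    have hsub := Nat.divisors_subset_of_dvd prodPrimes_ne_zero (Nat.dvd_of_mem_divisors hd)
    calc |lambdaSquared w d|
        ≤ ∑ d₁ ∈ d.divisors, ∑ d₂ ∈ d.divisors, if d = d₁.lcm d₂ then |w d₁| * |w d₂| else 0 := by
          refine (abs_sum_le_sum_abs _ _).trans (sum_le_sum fun d₁ _ ↦ ?_)
          refine (abs_sum_le_sum_abs _ _).trans (sum_le_sum fun d₂ _ ↦ ?_)
          split_ifs <;> simp [abs_mul]
      _ ≤ ∑ d₁ ∈ s.prodPrimes.divisors, ∑ d₂ ∈ d.divisors,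
            if d = d₁.lcm d₂ then |w d₁| * |w d₂| else 0 :=
          sum_le_sum_of_subset_of_nonneg hsub fun _ _ _ ↦ sum_nonneg fun _ _ ↦ by positivity
      _ ≤ _ := sum_le_sum fun _ _ ↦
          sum_le_sum_of_subset_of_nonneg hsub fun _ _ _ ↦ by positivity
  calc s.errSum (lambdaSquared w)
      ≤ ∑ d ∈ s.prodPrimes.divisors, ∑ d₁ ∈ s.prodPrimes.divisors, ∑ d₂ ∈ s.prodPrimes.divisors,
          if d = d₁.lcm d₂ then |w d₁| * |w d₂| * |s.rem d| else 0 := by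
        refine sum_le_sum fun d hd ↦ ?_
        refine (mul_le_mul_of_nonneg_right (habs d hd) (abs_nonneg _)).trans_eq ?_
        simp only [sum_mul, ite_mul, zero_mul]
    _ = _ := by
        rw [sum_comm]
        refine sum_congr rfl fun d₁ h₁ ↦ ?_
        rw [sum_comm]
        refine sum_congr rfl fun d₂ h₂ ↦ ?_
        rw [sum_ite_eq_of_mem']
        exact Nat.mem_divisors.mpr ⟨Nat.lcm_dvd (Nat.dvd_of_mem_divisors h₁)
          (Nat.dvd_of_mem_divisors h₂), prodPrimes_ne_zero⟩

theorem siftedSum_le_selbergSum (hz : 1 ≤ z) :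
    s.siftedSum ≤ s.totalMass / selbergSum s z +
      ∑ d₁ ∈ s.prodPrimes.divisors, ∑ d₂ ∈ s.prodPrimes.divisors,
        |selbergWeight s z d₁| * |selbergWeight s z d₂| * |s.rem (d₁.lcm d₂)| := by
  have hsieve := s.siftedSum_le_mainSum_errSum_of_upperMoebius (lambdaSquared (selbergWeight s z))
    (upperMoebius_lambdaSquared _ (selbergWeight_one hz))
  rw [mainSum_lambdaSquared_selbergWeight hz, ← div_eq_mul_inv] at hsieve
  exact hsieve.trans (by gcongr; exact errSum_lambdaSquared_le _)

end SelbergSieve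

section ShiftedPrimes

lemma abs_card_modEq_sub_le (N v : ℕ) {r : ℕ} (hr : 0 < r) :
    |(#{n ∈ range N | n ≡ v [MOD r]} : ℝ) - N / r| ≤ 1 := by
  have hcount := Nat.count_modEq_card (b := N) hr v
  rw [Nat.count_eq_card_filter_range] at hcount
  have hfloor : ((N / r : ℕ) : ℝ) ≤ N / r := Nat.cast_div_le
  have hceil : (N : ℝ) / r < (N / r : ℕ) + 1 := by
    rw [div_lt_iff₀ (by positivity)]
    exact_mod_cast Nat.lt_mul_of_div_lt (Nat.lt_succ_self _) hr
  rw [hcount, abs_le]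
  split_ifs <;> push_cast <;> constructor <;> linarith

lemma exists_dvd_and_dvd_add_iff_modEq (h : ℕ) {u v : ℕ} (huv : u.Coprime v) (hv : v ≠ 0) :
    ∃ k, ∀ n, u ∣ n ∧ v ∣ n + h ↔ n ≡ k [MOD u * v] := by
  obtain ⟨k, hku, hkv⟩ := Nat.chineseRemainder huv 0 (h * (v - 1))
  have hneg : h * (v - 1) + h ≡ 0 [MOD v] := by
    rw [← Nat.mul_succ, Nat.succ_eq_add_one, Nat.sub_add_cancel (Nat.one_le_iff_ne_zero.mpr hv)]
    exact Nat.modEq_zero_iff_dvd.mpr (dvd_mul_left v h)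
  refine ⟨k, fun n ↦ ?_⟩
  rw [← Nat.modEq_and_modEq_iff_modEq_mul huv, ← Nat.modEq_zero_iff_dvd, ← Nat.modEq_zero_iff_dvd]
  refine and_congr ⟨fun hn ↦ hn.trans hku.symm, fun hn ↦ hn.trans hku⟩ ⟨fun hn ↦ ?_, fun hn ↦ ?_⟩
  · exact ((hn.trans hneg.symm).add_right_cancel' h).trans hkv.symm
  · exact ((hn.trans hkv).add_right h).trans hneg

lemma dvd_mul_add_and_gcd_eq_iff {d h u : ℕ} (hd : d ≠ 0) (hdh : d.Coprime h) (hu : u ∣ d) (n : ℕ) :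
    d ∣ n * (n + h) ∧ n.gcd d = u ↔ u ∣ n ∧ d / u ∣ n + h := by
  obtain ⟨v, rfl⟩ := hu
  have hu : 0 < u := Nat.pos_of_ne_zero (left_ne_zero_of_mul hd)
  rw [Nat.mul_div_cancel_left v hu]
  constructor
  · rintro ⟨hdvd, hgcd⟩
    have hun : u ∣ n := hgcd ▸ Nat.gcd_dvd_left n (u * v)
    obtain ⟨m, rfl⟩ := hun
    have hmv : m.Coprime v := by
      rw [Nat.gcd_mul_left] at hgcd
      exact Nat.eq_of_mul_eq_mul_left hu (hgcd.trans (mul_one u).symm)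
    rw [mul_assoc] at hdvd
    exact ⟨dvd_mul_right u m, hmv.symm.dvd_of_dvd_mul_left (Nat.dvd_of_mul_dvd_mul_left hu hdvd)⟩
  · rintro ⟨hun, hvn⟩
    refine ⟨mul_dvd_mul hun hvn, ?_⟩
    have hnv : n.Coprime v := by
      have hh : n.gcd v ∣ h := (Nat.dvd_add_right (Nat.gcd_dvd_left n v)).mp
        ((Nat.gcd_dvd_right n v).trans hvn)
      exact Nat.eq_one_of_dvd_coprimes hdh ((Nat.gcd_dvd_right n v).trans (dvd_mul_left v u)) hh
    rw [Nat.Coprime.gcd_mul_right_cancel_right _ hnv.symm, Nat.gcd_eq_right hun]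

lemma abs_card_dvd_mul_add_sub_le (N : ℕ) {d h : ℕ} (hd : Squarefree d) (hdh : d.Coprime h) :
    |(#{n ∈ range N | d ∣ n * (n + h)} : ℝ) - #d.divisors / d * N| ≤ #d.divisors := by
  have hfiber : #{n ∈ range N | d ∣ n * (n + h)} =
      ∑ u ∈ d.divisors, #{n ∈ range N | u ∣ n ∧ d / u ∣ n + h} := by
    rw [card_eq_sum_card_fiberwise (f := fun n ↦ n.gcd d) (t := d.divisors)
      fun n _ ↦ Nat.mem_divisors.mpr ⟨Nat.gcd_dvd_right n d, hd.ne_zero⟩]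
    refine sum_congr rfl fun u hu ↦ ?_
    simp_rw [filter_filter,
      dvd_mul_add_and_gcd_eq_iff hd.ne_zero hdh (Nat.dvd_of_mem_divisors hu)]
  have hclass (u : ℕ) (hu : u ∈ d.divisors) :
      |(#{n ∈ range N | u ∣ n ∧ d / u ∣ n + h} : ℝ) - N / d| ≤ 1 := by
    have hud : u * (d / u) = d := Nat.mul_div_cancel' (Nat.dvd_of_mem_divisors hu)
    rw [← hud] at hd
    obtain ⟨k, hk⟩ := exists_dvd_and_dvd_add_iff_modEq h (Nat.coprime_of_squarefree_mul hd)
      (right_ne_zero_of_mul hd.ne_zero)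
    simp_rw [hk, hud]
    exact abs_card_modEq_sub_le N k (Nat.pos_of_mem_divisors (m := u) hu |>.trans_le <|
      Nat.divisor_le hu)
  calc |(#{n ∈ range N | d ∣ n * (n + h)} : ℝ) - #d.divisors / d * N|
      = |∑ u ∈ d.divisors, ((#{n ∈ range N | u ∣ n ∧ d / u ∣ n + h} : ℝ) - N / d)| := by
        rw [hfiber, sum_sub_distrib, sum_const, nsmul_eq_mul, Nat.cast_sum,
          div_mul_eq_mul_div, mul_div_assoc]
    _ ≤ ∑ _u ∈ d.divisors, (1 : ℝ) := (abs_sum_le_sum_abs _ _).trans (sum_le_sum hclass)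
    _ = #d.divisors := by simp

/-- The product of the primes `p ≤ z` not dividing `2 * h`. -/
def sievingModulus (h z : ℕ) : ℕ :=
  ∏ p ∈ range (z + 1) with p.Prime ∧ p.Coprime (2 * h), p

lemma sievingModulus_squarefree (h z : ℕ) : Squarefree (sievingModulus h z) := by
  refine squarefree_prod_of_pairwise_isCoprime (fun p hp q hq hpq ↦ ?_) fun p hp ↦ ?_
  · rw [Function.onFun, ← Nat.coprime_iff_isRelPrime]
    exact (Nat.coprime_primes (mem_filter.mp hp).2.1 (mem_filter.mp hq).2.1).mpr hpq
  · exact (mem_filter.mp hp).2.1.squarefree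

lemma sievingModulus_ne_zero (h z : ℕ) : sievingModulus h z ≠ 0 :=
  (sievingModulus_squarefree h z).ne_zero

lemma prime_dvd_sievingModulus_iff {h z p : ℕ} (hp : p.Prime) :
    p ∣ sievingModulus h z ↔ p ≤ z ∧ p.Coprime (2 * h) := by
  rw [sievingModulus, hp.prime.dvd_finsetProd_iff]
  constructor
  · rintro ⟨q, hq, hpq⟩
    obtain ⟨hqz, hq, hqh⟩ := mem_filter.mp hq
    obtain rfl := (Nat.prime_dvd_prime_iff_eq hp hq).mp hpq
    exact ⟨Nat.lt_succ_iff.mp (mem_range.mp hqz), hqh⟩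
  · rintro ⟨hpz, hph⟩
    exact ⟨p, mem_filter.mpr ⟨mem_range.mpr (Nat.lt_succ_of_le hpz), hp, hph⟩, dvd_rfl⟩

lemma coprime_of_dvd_sievingModulus {h z d : ℕ} (hd : d ∣ sievingModulus h z) :
    d.Coprime (2 * h) :=
  Nat.coprime_of_dvd fun _ hp hpd hph ↦ hp.ne_one <|
    Nat.eq_one_of_dvd_coprimes ((prime_dvd_sievingModulus_iff hp).mp (hpd.trans hd)).2 dvd_rfl hph

/-- The Selberg sieve problem bounding the number of primes `p < N` for which `p + h` is prime: the
integers `n * (n + h)` with `n < N` are sifted by the primes `p ≤ z` not dividing `2 * h`. -/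
noncomputable def primePairSieve (N h z : ℕ) : BoundingSieve where
  support := (range N).image fun n ↦ n * (n + h)
  prodPrimes := sievingModulus h z
  prodPrimes_squarefree := sievingModulus_squarefree h z
  weights := 1
  weights_nonneg _ := zero_le_one
  totalMass := N
  nu := ((σ 0 : ArithmeticFunction ℕ) : ArithmeticFunction ℝ).pdiv
    ((ArithmeticFunction.id : ArithmeticFunction ℕ) : ArithmeticFunction ℝ)
  nu_mult := ArithmeticFunction.isMultiplicative_sigma.natCast.pdiv
    ArithmeticFunction.isMultiplicative_id.natCast
  nu_pos_of_prime p hp _ := by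
    simp [ArithmeticFunction.pdiv_apply, hp.pos]
  nu_lt_one_of_prime p hp hpP := by
    have hodd : p ≠ 2 := by
      rintro rfl
      exact Nat.not_coprime_of_dvd_of_dvd one_lt_two dvd_rfl (dvd_mul_right 2 h)
        (coprime_of_dvd_sievingModulus hpP)
    have hp2 : (2 : ℝ) < p := mod_cast hp.two_le.lt_of_ne hodd.symm
    simp only [ArithmeticFunction.pdiv_apply, ArithmeticFunction.natCoe_apply,
      ArithmeticFunction.sigma_zero_apply, ArithmeticFunction.id_apply, hp.divisors,
      card_pair hp.ne_one.symm]
    rw [div_lt_one (by linarith)]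
    exact_mod_cast hp2

lemma injective_mul_add (h : ℕ) : (fun n : ℕ ↦ n * (n + h)).Injective := by
  refine StrictMono.injective fun a b hab ↦ ?_
  have := Nat.mul_lt_mul_of_lt_of_le hab hab.le (Nat.zero_lt_of_lt hab)
  simp only [mul_add]
  exact add_lt_add_of_lt_of_le this (Nat.mul_le_mul_right h hab.le)

variable {N h z : ℕ}

lemma primePairSieve_nu (d : ℕ) : (primePairSieve N h z).nu d = #d.divisors / d := by
  simp [primePairSieve, ArithmeticFunction.pdiv_apply, ArithmeticFunction.sigma_zero_apply]

lemma primePairSieve_multSum (d : ℕ) :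
    (primePairSieve N h z).multSum d = #{n ∈ range N | d ∣ n * (n + h)} := by
  simp only [BoundingSieve.multSum, primePairSieve]
  rw [sum_image (injective_mul_add h).injOn]
  simp

lemma abs_rem_primePairSieve_le {d : ℕ} (hd : d ∣ sievingModulus h z) :
    |(primePairSieve N h z).rem d| ≤ #d.divisors := by
  rw [BoundingSieve.rem, primePairSieve_multSum, primePairSieve_nu]
  exact abs_card_dvd_mul_add_sub_le N ((sievingModulus_squarefree h z).squarefree_of_dvd hd)
    (coprime_of_dvd_sievingModulus hd).coprime_mul_left_right

lemma card_divisors_lcm_le (a b : ℕ) : #(a.lcm b).divisors ≤ #a.divisors * #b.divisors := by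
  rcases eq_or_ne a 0 with rfl | ha
  · simp
  rcases eq_or_ne b 0 with rfl | hb
  · simp
  calc #(a.lcm b).divisors ≤ #(a * b).divisors :=
        card_le_card (Nat.divisors_subset_of_dvd (mul_ne_zero ha hb) (Nat.lcm_dvd_mul a b))
    _ ≤ #a.divisors * #b.divisors := by
        rw [Nat.divisors_mul]
        exact card_mul_le

lemma abs_selbergWeight_mul_card_divisors_le {d : ℕ} (hd : d ∈ (sievingModulus h z).divisors) :
    |selbergWeight (primePairSieve N h z) z d| * #d.divisors ≤ if d ≤ z then (z : ℝ) else 0 := by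
  split_ifs with hdz
  · have hτ : 0 < (#d.divisors : ℝ) :=
      mod_cast card_pos.mpr ⟨1, Nat.one_mem_divisors.mpr (Nat.pos_of_mem_divisors hd).ne'⟩
    calc |selbergWeight (primePairSieve N h z) z d| * #d.divisors
        ≤ (#d.divisors / d : ℝ)⁻¹ * #d.divisors := by
          gcongr
          rw [← primePairSieve_nu (N := N) (h := h) (z := z)]
          exact abs_selbergWeight_le (Nat.dvd_of_mem_divisors hd)
      _ = d := by field_simp
      _ ≤ z := mod_cast hdz
  · rw [selbergWeight_eq_zero_of_lt (not_le.mp hdz), abs_zero, zero_mul]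

lemma sum_selbergWeight_mul_rem_primePairSieve_le :
    ∑ d₁ ∈ (sievingModulus h z).divisors, ∑ d₂ ∈ (sievingModulus h z).divisors,
      |selbergWeight (primePairSieve N h z) z d₁| * |selbergWeight (primePairSieve N h z) z d₂| *
        |(primePairSieve N h z).rem (d₁.lcm d₂)| ≤ (z : ℝ) ^ 4 := by
  have hcard : #{d ∈ (sievingModulus h z).divisors | d ≤ z} ≤ z := by
    calc _ ≤ #(Icc 1 z) := card_le_card fun d hd ↦ by
          obtain ⟨hd, hdz⟩ := mem_filter.mp hd
          exact mem_Icc.mpr ⟨Nat.pos_of_mem_divisors hd, hdz⟩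
      _ = z := by simp
  calc _ ≤ ∑ d₁ ∈ (sievingModulus h z).divisors, ∑ d₂ ∈ (sievingModulus h z).divisors,
          (|selbergWeight (primePairSieve N h z) z d₁| * #d₁.divisors) *
            (|selbergWeight (primePairSieve N h z) z d₂| * #d₂.divisors) := by
        refine sum_le_sum fun d₁ h₁ ↦ sum_le_sum fun d₂ h₂ ↦ ?_
        have hrem := abs_rem_primePairSieve_le (N := N)
          (Nat.lcm_dvd (Nat.dvd_of_mem_divisors h₁) (Nat.dvd_of_mem_divisors h₂))
        have hlcm : (#(d₁.lcm d₂).divisors : ℝ) ≤ #d₁.divisors * #d₂.divisors :=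
          mod_cast card_divisors_lcm_le d₁ d₂
        rw [mul_mul_mul_comm]
        gcongr
        exact hrem.trans hlcm
    _ = (∑ d ∈ (sievingModulus h z).divisors,
          |selbergWeight (primePairSieve N h z) z d| * #d.divisors) ^ 2 := by
        rw [sq, sum_mul_sum]
    _ ≤ (∑ d ∈ (sievingModulus h z).divisors, if d ≤ z then (z : ℝ) else 0) ^ 2 := by
        gcongr with d hd
        exact abs_selbergWeight_mul_card_divisors_le hd
    _ = ((#{d ∈ (sievingModulus h z).divisors | d ≤ z} : ℝ) * z) ^ 2 := by
        rw [← sum_filter, sum_const, nsmul_eq_mul]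
    _ ≤ ((z : ℝ) * z) ^ 2 := by gcongr
    _ = (z : ℝ) ^ 4 := by ring

lemma coprime_sievingModulus_of_prime {p : ℕ} (hp : p.Prime) (hzp : z < p) :
    (sievingModulus h z).Coprime p :=
  ((Nat.coprime_or_dvd_of_prime hp _).resolve_right fun hdvd ↦
    hzp.not_ge ((prime_dvd_sievingModulus_iff hp).mp hdvd).1).symm

lemma card_prime_pair_le_siftedSum :
    (#{p ∈ range N | p.Prime ∧ (p + h).Prime} : ℝ) ≤
      z + 1 + (primePairSieve N h z).siftedSum := by
  have hsift : (primePairSieve N h z).siftedSum =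
      #{n ∈ range N | (sievingModulus h z).Coprime (n * (n + h))} := by
    rw [natCast_card_filter]
    exact sum_image (injective_mul_add h).injOn
  have hsub : {p ∈ range N | p.Prime ∧ (p + h).Prime} ⊆
      range (z + 1) ∪ {n ∈ range N | (sievingModulus h z).Coprime (n * (n + h))} := by
    intro p hp
    obtain ⟨hpN, hp, hph⟩ := mem_filter.mp hp
    rw [mem_union, mem_range, mem_filter]
    refine (lt_or_ge p (z + 1)).imp_right fun hzp ↦ ⟨hpN, ?_⟩
    exact (coprime_sievingModulus_of_prime hp hzp).mul_right
      (coprime_sievingModulus_of_prime hph (Nat.lt_of_lt_of_le hzp (Nat.le_add_right p h)))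
  rw [hsift]
  have hcard := (card_le_card hsub).trans (card_union_le _ _)
  rw [card_range] at hcard
  exact_mod_cast hcard

theorem card_prime_pair_le_selbergSum (hz : 1 ≤ z) :
    (#{p ∈ range N | p.Prime ∧ (p + h).Prime} : ℝ) ≤
      N / selbergSum (primePairSieve N h z) z + 3 * (z : ℝ) ^ 4 := by
  have hsieve := siftedSum_le_selbergSum (s := primePairSieve N h z) hz
  have herr := sum_selbergWeight_mul_rem_primePairSieve_le (N := N) (h := h) (z := z)
  have hpairs := card_prime_pair_le_siftedSum (N := N) (h := h) (z := z)
  have hz' : (1 : ℝ) ≤ z := mod_cast hz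
  have hz4 : (z : ℝ) ≤ (z : ℝ) ^ 4 := le_self_pow₀ hz' (by norm_num)
  have hmain : (primePairSieve N h z).siftedSum ≤
      N / selbergSum (primePairSieve N h z) z + (z : ℝ) ^ 4 :=
    hsieve.trans (add_le_add le_rfl herr)
  linarith

end ShiftedPrimes

section SelbergSumLowerBound

lemma sum_factoredNumbers_le_prod {f : ℕ →*₀ ℝ} (hf₀ : ∀ n, 0 ≤ f n)
    (hf₁ : ∀ p : ℕ, p.Prime → f p < 1) {S T : Finset ℕ}
    (hS : ∀ n ∈ S, n ∈ Nat.factoredNumbers T) :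
    ∑ n ∈ S, f n ≤ ∏ p ∈ T with p.Prime, (1 - f p)⁻¹ := by
  have heuler := (EulerProduct.summable_and_hasSum_factoredNumbers_prod_filter_prime_geometric
    (f := (f : ℕ →* ℝ)) (fun {p} hp ↦ by simpa [abs_of_nonneg (hf₀ p)] using hf₁ p hp) T).2
  have hsum := hasSum_subtype_iff_indicator.mp heuler
  calc ∑ n ∈ S, f n = ∑ n ∈ S, (Nat.factoredNumbers T).indicator f n :=
        sum_congr rfl fun n hn ↦ (Set.indicator_of_mem (hS n hn) f).symm
    _ ≤ _ := sum_le_hasSum S (fun n _ ↦ Set.indicator_nonneg (fun m _ ↦ hf₀ m) n) hsum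

lemma sum_primeFactors_eq_le_prod {f : ℕ →*₀ ℝ} (hf₀ : ∀ n, 0 ≤ f n)
    (hf₁ : ∀ p : ℕ, p.Prime → f p < 1) {S T : Finset ℕ} (hT : ∀ p ∈ T, p.Prime)
    (hS : ∀ n ∈ S, n ≠ 0 ∧ n.primeFactors = T) :
    ∑ n ∈ S, f n ≤ ∏ p ∈ T, f p * (1 - f p)⁻¹ := by
  have hdvd (n : ℕ) (hn : n ∈ S) : ∏ p ∈ T, p ∣ n := (hS n hn).2 ▸ Nat.prod_primeFactors_dvd n
  have hinj : Set.InjOn (· / ∏ p ∈ T, p) (S : Set ℕ) := fun a ha b hb hab ↦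
    (Nat.div_left_inj (hdvd a ha) (hdvd b hb)).mp hab
  have hsmooth : ∀ m ∈ S.image (· / ∏ p ∈ T, p), m ∈ Nat.factoredNumbers T := by
    refine forall_mem_image.mpr fun n hn ↦ Nat.mem_factoredNumbers'.mpr fun p hp hpn ↦ ?_
    rw [← (hS n hn).2, Nat.mem_primeFactors]
    exact ⟨hp, hpn.trans (Nat.div_dvd_of_dvd (hdvd n hn)), (hS n hn).1⟩
  calc ∑ n ∈ S, f n = ∑ n ∈ S, f (∏ p ∈ T, p) * f (n / ∏ p ∈ T, p) :=
        sum_congr rfl fun n hn ↦ by rw [← map_mul, Nat.mul_div_cancel' (hdvd n hn)]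
    _ = f (∏ p ∈ T, p) * ∑ m ∈ S.image (· / ∏ p ∈ T, p), f m := by
        rw [← mul_sum, sum_image hinj]
    _ ≤ (∏ p ∈ T, f p) * ∏ p ∈ T, (1 - f p)⁻¹ := by
        rw [map_prod]
        gcongr
        · exact prod_nonneg fun p _ ↦ hf₀ p
        · simpa only [filter_true_of_mem hT] using sum_factoredNumbers_le_prod hf₀ hf₁ hsmooth
    _ = ∏ p ∈ T, f p * (1 - f p)⁻¹ := prod_mul_distrib.symm

/-- The completely multiplicative function `2 ^ Ω(n) / n`, restricted to the integers coprime to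
`2 * h`; at the primes not dividing `2 * h` it is the density `2 / p` of `primePairSieve`. -/
noncomputable def twoPowOmegaDiv (h : ℕ) : ℕ →*₀ ℝ where
  toFun n := if n.Coprime (2 * h) then 2 ^ Ω n / n else 0
  map_zero' := by simp
  map_one' := by simp
  map_mul' a b := by
    rcases eq_or_ne a 0 with rfl | ha
    · simp
    rcases eq_or_ne b 0 with rfl | hb
    · simp
    by_cases hah : a.Coprime (2 * h) <;> by_cases hbh : b.Coprime (2 * h)
    · rw [if_pos (Nat.Coprime.mul_left hah hbh), if_pos hah, if_pos hbh,
        ArithmeticFunction.cardFactors_mul ha hb, pow_add, Nat.cast_mul, mul_div_mul_comm]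
    all_goals simp [Nat.coprime_mul_iff_left, hah, hbh]

variable {h : ℕ}

lemma twoPowOmegaDiv_of_coprime {n : ℕ} (hn : n.Coprime (2 * h)) :
    twoPowOmegaDiv h n = 2 ^ Ω n / n :=
  if_pos hn

lemma twoPowOmegaDiv_of_not_coprime {n : ℕ} (hn : ¬ n.Coprime (2 * h)) :
    twoPowOmegaDiv h n = 0 :=
  if_neg hn

lemma twoPowOmegaDiv_nonneg (n : ℕ) : 0 ≤ twoPowOmegaDiv h n := by
  by_cases hn : n.Coprime (2 * h)
  · rw [twoPowOmegaDiv_of_coprime hn]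
    positivity
  · rw [twoPowOmegaDiv_of_not_coprime hn]

lemma twoPowOmegaDiv_prime_lt_one {p : ℕ} (hp : p.Prime) : twoPowOmegaDiv h p < 1 := by
  by_cases hph : p.Coprime (2 * h)
  · have hp2 : p ≠ 2 := by
      rintro rfl
      exact Nat.not_coprime_of_dvd_of_dvd one_lt_two dvd_rfl (dvd_mul_right 2 h) hph
    rw [twoPowOmegaDiv_of_coprime hph, ArithmeticFunction.cardFactors_apply_prime hp, pow_one,
      div_lt_one (mod_cast hp.pos)]
    exact_mod_cast hp.two_le.lt_of_ne hp2.symm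
  · rw [twoPowOmegaDiv_of_not_coprime hph]
    exact zero_lt_one

lemma selbergTerms_primePairSieve {N z d : ℕ} (hd : d ∣ sievingModulus h z) :
    (primePairSieve N h z).selbergTerms d =
      ∏ p ∈ d.primeFactors, twoPowOmegaDiv h p * (1 - twoPowOmegaDiv h p)⁻¹ := by
  rw [BoundingSieve.selbergTerms_apply, ← BoundingSieve.prod_primeFactors_nu hd,
    ← prod_mul_distrib]
  refine prod_congr rfl fun p hp ↦ ?_
  have hpp := Nat.prime_of_mem_primeFactors hp
  have hph := ((prime_dvd_sievingModulus_iff hpp).mp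
    ((Nat.dvd_of_mem_primeFactors hp).trans hd)).2
  have hnu : (primePairSieve N h z).nu p = twoPowOmegaDiv h p := by
    rw [primePairSieve_nu, twoPowOmegaDiv_of_coprime hph, hpp.divisors, card_pair hpp.ne_one.symm,
      ArithmeticFunction.cardFactors_apply_prime hpp]
    norm_num
  rw [hnu]

lemma prod_primeFactors_dvd_sievingModulus {n z : ℕ} (hnz : n ≤ z) (hnh : n.Coprime (2 * h)) :
    ∏ p ∈ n.primeFactors, p ∣ sievingModulus h z := by
  refine prod_primes_dvd _ (fun p hp ↦ (Nat.prime_of_mem_primeFactors hp).prime) fun p hp ↦ ?_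
  exact (prime_dvd_sievingModulus_iff (Nat.prime_of_mem_primeFactors hp)).mpr
    ⟨(Nat.le_of_mem_primeFactors hp).trans hnz,
      hnh.coprime_dvd_left (Nat.dvd_of_mem_primeFactors hp)⟩

lemma sum_twoPowOmegaDiv_le_selbergSum (N h z : ℕ) :
    ∑ n ∈ Icc 1 z with n.Coprime (2 * h), (2 ^ Ω n / n : ℝ) ≤
      selbergSum (primePairSieve N h z) z := by
  have hmaps : ∀ n ∈ {n ∈ Icc 1 z | n.Coprime (2 * h)}, ∏ p ∈ n.primeFactors, p ∈
      {d ∈ (sievingModulus h z).divisors | d ≤ z} := by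
    intro n hn
    obtain ⟨hn, hnh⟩ := mem_filter.mp hn
    obtain ⟨hn, hnz⟩ := mem_Icc.mp hn
    exact mem_filter.mpr ⟨Nat.mem_divisors.mpr
      ⟨prod_primeFactors_dvd_sievingModulus hnz hnh, sievingModulus_ne_zero h z⟩,
      (Nat.le_of_dvd hn (Nat.prod_primeFactors_dvd n)).trans hnz⟩
  rw [← sum_fiberwise_of_maps_to hmaps]
  refine sum_le_sum fun d hd ↦ ?_
  have hdP := Nat.dvd_of_mem_divisors (mem_of_mem_filter d hd)
  rw [selbergTerms_primePairSieve hdP]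
  refine (sum_congr rfl fun n hn ↦ ?_).trans_le (sum_primeFactors_eq_le_prod
    twoPowOmegaDiv_nonneg (fun p ↦ twoPowOmegaDiv_prime_lt_one)
    (fun p ↦ Nat.prime_of_mem_primeFactors) fun n hn ↦ ?_)
  · exact (twoPowOmegaDiv_of_coprime (mem_filter.mp (mem_filter.mp hn).1).2).symm
  · obtain ⟨hnz, rfl⟩ := mem_filter.mp hn
    refine ⟨Nat.one_le_iff_ne_zero.mp (mem_Icc.mp (mem_filter.mp hnz).1).1, ?_⟩
    exact (Nat.primeFactors_prod fun p ↦ Nat.prime_of_mem_primeFactors).symm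

lemma card_divisors_le_two_pow_cardFactors {n : ℕ} (hn : n ≠ 0) : #n.divisors ≤ 2 ^ Ω n := by
  induction n using Nat.recOnMul with
  | zero => exact absurd rfl hn
  | one => simp
  | prime p hp => rw [hp.divisors, card_pair hp.ne_one.symm,
      ArithmeticFunction.cardFactors_apply_prime hp, pow_one]
  | mul a b iha ihb =>
    obtain ⟨ha, hb⟩ := mul_ne_zero_iff.mp hn
    calc #(a * b).divisors ≤ #a.divisors * #b.divisors := by
          rw [Nat.divisors_mul]
          exact card_mul_le
      _ ≤ 2 ^ Ω a * 2 ^ Ω b := Nat.mul_le_mul (iha ha) (ihb hb)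
      _ = 2 ^ Ω (a * b) := by rw [ArithmeticFunction.cardFactors_mul ha hb, pow_add]

lemma sq_sum_coprime_le_sum_twoPowOmegaDiv (k w : ℕ) :
    (∑ a ∈ Icc 1 w with a.Coprime k, (1 / a : ℝ)) ^ 2 ≤
      ∑ n ∈ Icc 1 (w ^ 2) with n.Coprime k, (2 ^ Ω n / n : ℝ) := by
  let A : Finset ℕ := {a ∈ Icc 1 w | a.Coprime k}
  have hmaps : ∀ x ∈ A ×ˢ A, x.1 * x.2 ∈ {n ∈ Icc 1 (w ^ 2) | n.Coprime k} := by
    intro x hx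
    simp only [A, mem_product, mem_filter, mem_Icc] at hx ⊢
    exact ⟨⟨Nat.mul_pos hx.1.1.1 hx.2.1.1, (sq w).symm ▸ Nat.mul_le_mul hx.1.1.2 hx.2.1.2⟩,
      hx.1.2.mul_left hx.2.2⟩
  calc (∑ a ∈ A, (1 / a : ℝ)) ^ 2 = ∑ x ∈ A ×ˢ A, (1 / (x.1 * x.2 : ℕ) : ℝ) := by
        rw [sq, sum_mul_sum, sum_product]
        simp only [Nat.cast_mul, one_div_mul_one_div]
    _ = ∑ n ∈ Icc 1 (w ^ 2) with n.Coprime k, ∑ x ∈ A ×ˢ A with x.1 * x.2 = n,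
          (1 / (x.1 * x.2 : ℕ) : ℝ) := (sum_fiberwise_of_maps_to hmaps _).symm
    _ = ∑ n ∈ Icc 1 (w ^ 2) with n.Coprime k, (#{x ∈ A ×ˢ A | x.1 * x.2 = n} / n : ℝ) := by
        refine sum_congr rfl fun n _ ↦ ?_
        rw [sum_congr rfl fun x hx ↦ by rw [(mem_filter.mp hx).2], sum_const, nsmul_eq_mul,
          mul_one_div]
    _ ≤ _ := by
        refine sum_le_sum fun n hn ↦ ?_
        have hn₀ : n ≠ 0 := Nat.pos_iff_ne_zero.mp (mem_Icc.mp (mem_filter.mp hn).1).1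
        have hτ : #{x ∈ A ×ˢ A | x.1 * x.2 = n} ≤ #n.divisors := by
          refine card_le_card_of_injOn Prod.fst (fun x hx ↦ ?_) fun x hx y hy hxy ↦ ?_
          · exact Nat.mem_divisors.mpr ⟨⟨x.2, (mem_filter.mp hx).2.symm⟩, hn₀⟩
          · have hx := (mem_filter.mp hx).2
            have hy := (mem_filter.mp hy).2
            rw [← hxy, ← hx] at hy
            exact Prod.ext hxy (Nat.eq_of_mul_eq_mul_left
              (Nat.pos_of_ne_zero (left_ne_zero_of_mul (hx.trans_ne hn₀))) hy.symm)
        gcongr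
        exact_mod_cast hτ.trans (card_divisors_le_two_pow_cardFactors hn₀)

lemma sum_inv_filter_dvd_le {w q : ℕ} (hq : 0 < q) {P : ℕ → Prop} [DecidablePred P]
    (hP : ∀ m, P (q * m) → P m) :
    ∑ n ∈ Icc 1 w with P n ∧ q ∣ n, (1 / n : ℝ) ≤
      1 / q * ∑ n ∈ Icc 1 w with P n, (1 / n : ℝ) := by
  have hsub : {n ∈ Icc 1 w | P n ∧ q ∣ n} ⊆ {n ∈ Icc 1 w | P n}.image (q * ·) := by
    intro n hn
    simp only [mem_filter, mem_Icc, mem_image] at hn ⊢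
    obtain ⟨⟨hn, hnw⟩, hPn, m, rfl⟩ := hn
    exact ⟨m, ⟨⟨Nat.pos_of_mul_pos_left hn, (Nat.le_mul_of_pos_left m hq).trans hnw⟩,
      hP m hPn⟩, rfl⟩
  calc _ ≤ ∑ n ∈ {n ∈ Icc 1 w | P n}.image (q * ·), (1 / n : ℝ) :=
        sum_le_sum_of_subset_of_nonneg hsub fun _ _ _ ↦ by positivity
    _ = _ := by
        rw [sum_image fun _ _ _ _ h ↦ Nat.eq_of_mul_eq_mul_left hq h, mul_sum]
        simp only [Nat.cast_mul, one_div_mul_one_div]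

lemma prod_one_sub_inv_mul_sum_inv_le (w : ℕ) {Q : Finset ℕ} (hQ : ∀ q ∈ Q, 0 < q) :
    (∏ q ∈ Q, (1 - 1 / q : ℝ)) * ∑ n ∈ Icc 1 w, (1 / n : ℝ) ≤
      ∑ n ∈ Icc 1 w with ∀ q ∈ Q, ¬ q ∣ n, (1 / n : ℝ) := by
  induction Q using Finset.induction_on with
  | empty => simp
  | insert q Q hqQ ih =>
    have hq : 0 < q := hQ q (mem_insert_self q Q)
    have hq₁ : (1 / q : ℝ) ≤ 1 := by
      rw [div_le_one (mod_cast hq)]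
      exact_mod_cast hq
    have hdvd := sum_inv_filter_dvd_le (w := w) hq (P := fun n ↦ ∀ q' ∈ Q, ¬ q' ∣ n)
      fun m hm q' hq' hdvd ↦ hm q' hq' (hdvd.mul_left q)
    have hsplit := sum_filter_add_sum_filter_not {n ∈ Icc 1 w | ∀ q' ∈ Q, ¬ q' ∣ n}
      (q ∣ ·) (fun n ↦ (1 / n : ℝ))
    simp only [filter_filter] at hsplit
    have hins : {n ∈ Icc 1 w | ∀ q' ∈ insert q Q, ¬ q' ∣ n} =
        {n ∈ Icc 1 w | (∀ q' ∈ Q, ¬ q' ∣ n) ∧ ¬ q ∣ n} := by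
      simp only [forall_mem_insert, and_comm]
    rw [prod_insert hqQ, mul_assoc, hins]
    calc _ ≤ (1 - 1 / q : ℝ) * ∑ n ∈ Icc 1 w with ∀ q' ∈ Q, ¬ q' ∣ n, (1 / n : ℝ) :=
          mul_le_mul_of_nonneg_left (ih fun q' hq' ↦ hQ q' (mem_insert_of_mem hq'))
            (sub_nonneg.mpr hq₁)
      _ ≤ _ := by linarith

/-- The sum of the reciprocals of the odd prime factors of `h`. -/
noncomputable def oddPrimeRecipSum (h : ℕ) : ℝ :=
  ∑ p ∈ h.primeFactors.erase 2, (1 / p : ℝ)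

lemma oddPrimeRecipSum_nonneg (h : ℕ) : 0 ≤ oddPrimeRecipSum h :=
  sum_nonneg fun _ _ ↦ by positivity

lemma exp_neg_two_div_le {p : ℕ} (hp : 2 ≤ p) : Real.exp (-(2 / p)) ≤ 1 - 1 / p := by
  have hp' : (2 : ℝ) ≤ p := mod_cast hp
  have hinv : (1 - 1 / p : ℝ)⁻¹ ≤ 2 / p + 1 := by
    rw [inv_le_iff_one_le_mul₀ (by rw [sub_pos, div_lt_one] <;> linarith)]
    field_simp
    nlinarith
  rw [Real.exp_neg]
  exact inv_le_of_inv_le₀ (by rw [sub_pos, div_lt_one] <;> linarith)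
    (hinv.trans (Real.add_one_le_exp _))

lemma exp_neg_oddPrimeRecipSum_le (hh : h ≠ 0) :
    Real.exp (-(2 * oddPrimeRecipSum h)) / 2 ≤ ∏ p ∈ (2 * h).primeFactors, (1 - 1 / p : ℝ) := by
  have hprime : (2 * h).primeFactors = insert 2 (h.primeFactors.erase 2) := by
    rw [Nat.primeFactors_mul two_ne_zero hh, Nat.prime_two.primeFactors]
    grind
  have hodd : Real.exp (-(2 * oddPrimeRecipSum h)) ≤
      ∏ p ∈ h.primeFactors.erase 2, (1 - 1 / p : ℝ) := by
    rw [oddPrimeRecipSum, mul_sum, ← sum_neg_distrib, Real.exp_sum]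
    refine prod_le_prod (fun _ _ ↦ (Real.exp_pos _).le) fun p hp ↦ ?_
    rw [mul_one_div]
    exact exp_neg_two_div_le (Nat.prime_of_mem_primeFactors (mem_of_mem_erase hp)).two_le
  rw [hprime, prod_insert (notMem_erase 2 _), Nat.cast_ofNat]
  linarith

lemma coprime_iff_forall_primeFactors_not_dvd {k : ℕ} (hk : k ≠ 0) (n : ℕ) :
    n.Coprime k ↔ ∀ p ∈ k.primeFactors, ¬ p ∣ n := by
  simp only [Nat.mem_primeFactors, and_imp]
  refine ⟨fun hn p hp hpk _ hpn ↦ hp.ne_one (Nat.eq_one_of_dvd_coprimes hn hpn hpk), fun hn ↦ ?_⟩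
  exact Nat.coprime_of_dvd fun p hp hpn hpk ↦ hn p hp hpk hk hpn

theorem le_selbergSum_primePairSieve (N : ℕ) {w : ℕ} (hh : h ≠ 0) :
    Real.exp (-(4 * oddPrimeRecipSum h)) / 4 * Real.log w ^ 2 ≤
      selbergSum (primePairSieve N h (w ^ 2)) (w ^ 2) := by
  have hharm : Real.log w ≤ ∑ n ∈ Icc 1 w, (1 / n : ℝ) := by
    rcases w.eq_zero_or_pos with rfl | hw
    · simp
    have := log_add_one_le_harmonic w
    rw [harmonic_eq_sum_Icc] at this
    push_cast at this
    simp only [one_div]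
    refine (Real.log_le_log (mod_cast hw) ?_).trans this
    linarith
  have hcoprime : Real.exp (-(2 * oddPrimeRecipSum h)) / 2 * Real.log w ≤
      ∑ n ∈ Icc 1 w with n.Coprime (2 * h), (1 / n : ℝ) := by
    simp only [coprime_iff_forall_primeFactors_not_dvd (mul_ne_zero two_ne_zero hh)]
    refine le_trans ?_ (prod_one_sub_inv_mul_sum_inv_le w fun p hp ↦
      (Nat.prime_of_mem_primeFactors hp).pos)
    gcongr
    · exact (by positivity : 0 ≤ Real.exp _ / 2).trans (exp_neg_oddPrimeRecipSum_le hh)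
    · exact exp_neg_oddPrimeRecipSum_le hh
  calc _ = (Real.exp (-(2 * oddPrimeRecipSum h)) / 2 * Real.log w) ^ 2 := by
        rw [mul_pow, div_pow, ← Real.exp_nat_mul]
        ring_nf
    _ ≤ (∑ n ∈ Icc 1 w with n.Coprime (2 * h), (1 / n : ℝ)) ^ 2 := by
        gcongr
    _ ≤ _ := (sq_sum_coprime_le_sum_twoPowOmegaDiv (2 * h) w).trans
        (sum_twoPowOmegaDiv_le_selbergSum N h (w ^ 2))

theorem card_prime_pair_le (N : ℕ) {w : ℕ} (hw : 2 ≤ w) (hh : h ≠ 0) :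
    (#{p ∈ range N | p.Prime ∧ (p + h).Prime} : ℝ) ≤
      4 * N / Real.log w ^ 2 * Real.exp (4 * oddPrimeRecipSum h) + 3 * (w : ℝ) ^ 8 := by
  have hlog : 0 < Real.log w := Real.log_pos (mod_cast hw)
  have hS := le_selbergSum_primePairSieve N (w := w) hh
  calc _ ≤ N / selbergSum (primePairSieve N h (w ^ 2)) (w ^ 2) + 3 * ((w ^ 2 : ℕ) : ℝ) ^ 4 :=
        card_prime_pair_le_selbergSum (Nat.one_le_pow _ _ (by lia))
    _ ≤ N / (Real.exp (-(4 * oddPrimeRecipSum h)) / 4 * Real.log w ^ 2) +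
          3 * ((w ^ 2 : ℕ) : ℝ) ^ 4 := by gcongr
    _ = _ := by
        rw [Real.exp_neg]
        push_cast
        field_simp

lemma exists_log_le_and_pow_le {N : ℕ} (hN : 2 ^ 32 ≤ N) :
    ∃ w : ℕ, 2 ≤ w ∧ Real.log N ≤ 32 * Real.log w ∧
      (w : ℝ) ^ 8 ≤ 16 * (N / Real.log N ^ 2) := by
  have hN' : (2 : ℝ) ^ 32 ≤ N := mod_cast hN
  have hN₀ : (0 : ℝ) < N := by linarith
  have hlog : 0 < Real.log N := Real.log_pos (by linarith)
  set y : ℝ := (N : ℝ) ^ (1 / 32 : ℝ) with hy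
  have hypow (k : ℕ) : y ^ k = (N : ℝ) ^ ((k : ℝ) / 32) := by
    rw [hy, ← Real.rpow_mul_natCast hN₀.le]
    ring_nf
  have hy₂ : 2 ≤ y := by
    calc (2 : ℝ) = ((2 : ℝ) ^ 32) ^ (1 / 32 : ℝ) := by
          rw [← Real.rpow_natCast_mul zero_le_two]
          norm_num
      _ ≤ y := Real.rpow_le_rpow (by positivity) hN' (by norm_num)
  have hw : y ≤ ⌊y ^ 2⌋₊ := by nlinarith [Nat.lt_floor_add_one (y ^ 2)]
  refine ⟨⌊y ^ 2⌋₊, mod_cast hy₂.trans hw, ?_, ?_⟩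
  · calc Real.log N = 32 * Real.log y := by rw [hy, Real.log_rpow hN₀]; ring
      _ ≤ 32 * Real.log ⌊y ^ 2⌋₊ := by gcongr
  · have hlog_le : Real.log N ≤ 4 * y ^ 8 := by
      have := Real.log_le_rpow_div hN₀.le (ε := 1 / 4) (by norm_num)
      rw [hypow]
      norm_num at this ⊢
      linarith
    have hy32 : y ^ 32 = N := by rw [hypow]; norm_num
    calc (⌊y ^ 2⌋₊ : ℝ) ^ 8 ≤ (y ^ 2) ^ 8 := by
          gcongr
          exact Nat.floor_le (by positivity)
      _ = 16 * (N / (4 * y ^ 8) ^ 2) := by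
          rw [← hy32]
          field_simp
          norm_num
      _ ≤ 16 * (N / Real.log N ^ 2) := by gcongr

theorem exists_card_prime_pair_le : ∃ C > 0, ∀ᶠ N : ℕ in atTop, ∀ h ≠ 0,
    (#{p ∈ range N | p.Prime ∧ (p + h).Prime} : ℝ) ≤
      C * (N / Real.log N ^ 2) * Real.exp (4 * oddPrimeRecipSum h) := by
  refine ⟨4 * 32 ^ 2 + 48, by norm_num, (eventually_ge_atTop (2 ^ 32)).mono fun N hN h hh ↦ ?_⟩
  obtain ⟨w, hw, hlogw, hw8⟩ := exists_log_le_and_pow_le hN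
  have hlog : 0 < Real.log N := Real.log_pos (mod_cast (by norm_num : 1 < 2 ^ 32).trans_le hN)
  have hexp : 1 ≤ Real.exp (4 * oddPrimeRecipSum h) :=
    Real.one_le_exp (mul_nonneg zero_le_four (oddPrimeRecipSum_nonneg h))
  calc _ ≤ 4 * N / Real.log w ^ 2 * Real.exp (4 * oddPrimeRecipSum h) + 3 * (w : ℝ) ^ 8 :=
        card_prime_pair_le N hw hh
    _ ≤ 4 * N / (Real.log N / 32) ^ 2 * Real.exp (4 * oddPrimeRecipSum h) +
        3 * (16 * (N / Real.log N ^ 2)) * Real.exp (4 * oddPrimeRecipSum h) := by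
      refine add_le_add ?_ ?_
      · gcongr
        linarith
      · exact (mul_le_mul_of_nonneg_left hw8 zero_le_three).trans
          (le_mul_of_one_le_right (by positivity) hexp)
    _ = _ := by
      field_simp
      norm_num

end SelbergSumLowerBound

section SquaresInResidueClasses

lemma exists_add_one_le_mul_rpow {ε : ℝ} (hε : 0 < ε) :
    ∃ K ≥ 1, ∀ x ≥ 2, ∀ e : ℕ, (e + 1 : ℝ) ≤ K * x ^ (ε * e) := by
  have : 0 < Real.log 2 := Real.log_pos one_lt_two
  have hK : 0 < 1 / (ε * Real.log 2) := by positivity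
  refine ⟨1 + 1 / (ε * Real.log 2), by linarith, fun x hx e ↦ ?_⟩
  calc (e + 1 : ℝ) ≤ (1 + 1 / (ε * Real.log 2)) * (1 + Real.log 2 * (ε * e)) := by
        have : 1 / (ε * Real.log 2) * (Real.log 2 * (ε * e)) = e := by field_simp
        have : 0 ≤ Real.log 2 * (ε * e) := by positivity
        linarith
    _ ≤ (1 + 1 / (ε * Real.log 2)) * x ^ (ε * e) := by
        gcongr
        calc 1 + Real.log 2 * (ε * e) ≤ Real.exp (Real.log 2 * (ε * e)) := by
              linarith [Real.add_one_le_exp (Real.log 2 * (ε * e))]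
          _ = 2 ^ (ε * e) := (Real.rpow_def_of_pos two_pos _).symm
          _ ≤ x ^ (ε * e) := Real.rpow_le_rpow zero_le_two hx (by positivity)

/-- The local factor `(e + 1) / p ^ (ε * e)` is bounded, exceeding `1` only when `p ^ ε < 2`. -/
theorem exists_card_divisors_le_rpow {ε : ℝ} (hε : 0 < ε) :
    ∃ C > 0, ∀ n : ℕ, (#n.divisors : ℝ) ≤ C * (n : ℝ) ^ ε := by
  obtain ⟨K, hK, hlocal⟩ := exists_add_one_le_mul_rpow hε
  set B := ⌈(2 : ℝ) ^ ε⁻¹⌉₊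
  refine ⟨K ^ B, by positivity, fun n ↦ ?_⟩
  rcases eq_or_ne n 0 with rfl | hn
  · simpa using by positivity
  have hfactor (p : ℕ) (hp : p ∈ n.primeFactors) : (n.factorization p + 1 : ℝ) ≤
      (if p < B then K else 1) * ((p : ℝ) ^ n.factorization p) ^ ε := by
    have hp₂ : (2 : ℝ) ≤ p := mod_cast (Nat.prime_of_mem_primeFactors hp).two_le
    rw [← Real.rpow_natCast_mul p.cast_nonneg, mul_comm (_ : ℝ) ε]
    split_ifs with hpB
    · exact hlocal p hp₂ _
    · have hpε : 2 ≤ (p : ℝ) ^ ε := by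
        have := (Nat.le_ceil _).trans (Nat.cast_le (α := ℝ).mpr (not_lt.mp hpB))
        exact (Real.rpow_inv_le_iff_of_pos zero_le_two p.cast_nonneg hε).mp this
      calc (n.factorization p + 1 : ℝ) ≤ 2 ^ n.factorization p :=
            mod_cast Nat.lt_two_pow_self
        _ ≤ ((p : ℝ) ^ ε) ^ n.factorization p := by gcongr
        _ = 1 * (p : ℝ) ^ (ε * n.factorization p) := by
            rw [one_mul, Real.rpow_mul_natCast p.cast_nonneg]
  calc (#n.divisors : ℝ) = ∏ p ∈ n.primeFactors, (n.factorization p + 1 : ℝ) := by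
        rw [Nat.card_divisors hn]
        push_cast
        rfl
    _ ≤ ∏ p ∈ n.primeFactors,
          (if p < B then K else 1) * ((p : ℝ) ^ n.factorization p) ^ ε :=
        prod_le_prod (fun p _ ↦ by positivity) hfactor
    _ = K ^ #{p ∈ n.primeFactors | p < B} * (n : ℝ) ^ ε := by
        rw [prod_mul_distrib, Real.finsetProd_rpow _ _ (fun p _ ↦ by positivity), ← prod_filter,
          prod_const]
        congr 2
        exact_mod_cast Nat.prod_factorization_pow_eq_self hn
    _ ≤ K ^ B * (n : ℝ) ^ ε := by
        gcongr
        calc #{p ∈ n.primeFactors | p < B} ≤ #(range B) :=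
              card_le_card fun p hp ↦ mem_range.mpr (mem_filter.mp hp).2
          _ = B := card_range B

lemma exists_mem_divisors_of_dvd_mul {a b k : ℕ} (hk : k ≠ 0) (h : k ∣ a * b) :
    ∃ g ∈ k.divisors, k ≤ g ^ 2 ∧ (g ∣ a ∨ g ∣ b) := by
  obtain ⟨d, e, hd, he, rfl⟩ := Nat.dvd_mul.mp h
  rcases le_total d e with hde | hed
  · exact ⟨e, Nat.mem_divisors.mpr ⟨dvd_mul_left e d, hk⟩,
      by rw [sq]; gcongr, Or.inr he⟩
  · exact ⟨d, Nat.mem_divisors.mpr ⟨dvd_mul_right d e, hk⟩,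
      by rw [sq]; gcongr, Or.inl hd⟩

lemma card_dvd_add_or_modEq_le (N a : ℕ) {r : ℕ} (hr : 0 < r) :
    (#{n ∈ range N | r ∣ n + a ∨ n ≡ a [MOD r]} : ℝ) ≤ 2 * (N / r + 1) := by
  obtain ⟨v, hv⟩ := exists_dvd_and_dvd_add_iff_modEq a (Nat.coprime_one_left r) hr.ne'
  simp only [one_dvd, true_and, one_mul] at hv
  have hunion : #{n ∈ range N | r ∣ n + a ∨ n ≡ a [MOD r]} ≤
      #{n ∈ range N | n ≡ v [MOD r]} + #{n ∈ range N | n ≡ a [MOD r]} := by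
    simp only [hv, filter_or]
    exact card_union_le _ _
  have hv' := (abs_le.mp (abs_card_modEq_sub_le N v hr)).2
  have ha' := (abs_le.mp (abs_card_modEq_sub_le N a hr)).2
  have : (#{n ∈ range N | r ∣ n + a ∨ n ≡ a [MOD r]} : ℝ) ≤
      #{n ∈ range N | n ≡ v [MOD r]} + #{n ∈ range N | n ≡ a [MOD r]} := mod_cast hunion
  linarith

/-- With `a` the least element of `S`, every `m ∈ S` satisfies `k ∣ (m + a) * (m - a)`, so one of
the two factors is divisible by a divisor of `k` that is at least `√k`. -/
theorem card_le_of_sq_modEq {M k : ℕ} {S : Finset ℕ} (hk : k ≠ 0) (hS : S ⊆ range M)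
    (hsq : ∀ a ∈ S, ∀ b ∈ S, a ^ 2 ≡ b ^ 2 [MOD k]) :
    (#S : ℝ) ≤ #k.divisors * (2 * (M / √k + 1)) := by
  rcases S.eq_empty_or_nonempty with rfl | hne
  · simpa using by positivity
  set a := S.min' hne
  set G := {g ∈ k.divisors | k ≤ g ^ 2}
  have hcover : S ⊆ G.biUnion fun g ↦ {m ∈ range M | g ∣ m + a ∨ m ≡ a [MOD g]} := by
    intro m hm
    have ham : a ≤ m := S.min'_le m hm
    have hdvd : k ∣ (m + a) * (m - a) := by
      rw [← Nat.sq_sub_sq]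
      exact (Nat.modEq_iff_dvd' (Nat.pow_le_pow_left ham 2)).mp (hsq a (S.min'_mem hne) m hm)
    obtain ⟨g, hg, hkg, hga⟩ := exists_mem_divisors_of_dvd_mul hk hdvd
    refine mem_biUnion.mpr ⟨g, mem_filter.mpr ⟨hg, hkg⟩, mem_filter.mpr ⟨hS hm, ?_⟩⟩
    exact hga.imp_right fun hgm ↦ ((Nat.modEq_iff_dvd' ham).mpr hgm).symm
  have hclass (g : ℕ) (hg : g ∈ G) :
      (#{m ∈ range M | g ∣ m + a ∨ m ≡ a [MOD g]} : ℝ) ≤ 2 * (M / √k + 1) := by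
    obtain ⟨hgk, hkg⟩ := mem_filter.mp hg
    have hsqrt : √k ≤ g := (Real.sqrt_le_left g.cast_nonneg).mpr (mod_cast hkg)
    have : 0 < √(k : ℝ) := Real.sqrt_pos.mpr (mod_cast Nat.pos_of_ne_zero hk)
    refine (card_dvd_add_or_modEq_le M a (Nat.pos_of_mem_divisors hgk)).trans ?_
    gcongr
  calc (#S : ℝ) ≤ ∑ g ∈ G, (#{m ∈ range M | g ∣ m + a ∨ m ≡ a [MOD g]} : ℝ) :=
        mod_cast (card_le_card hcover).trans card_biUnion_le
    _ ≤ #G * (2 * (M / √k + 1)) := by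
        simpa using sum_le_card_nsmul G _ _ hclass
    _ ≤ #k.divisors * (2 * (M / √k + 1)) := by
        gcongr
        exact filter_subset _ _

theorem card_pow_sq_eq_le {G : Type*} [Monoid G] [DecidableEq G] {g : G} (hg : IsOfFinOrder g)
    {M : ℕ} (hM : orderOf g ≤ M ^ 2) (c : G) :
    (#{m ∈ range M | g ^ m ^ 2 = c} : ℝ) ≤ #(orderOf g).divisors * (4 * (M / √(orderOf g))) := by
  have hk : 0 < orderOf g := hg.orderOf_pos
  have hone : 1 ≤ (M : ℝ) / √(orderOf g) := by
    rw [one_le_div (Real.sqrt_pos.mpr (mod_cast hk)), Real.sqrt_le_left M.cast_nonneg]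
    exact_mod_cast hM
  refine (card_le_of_sq_modEq hk.ne' (filter_subset _ _) fun a ha b hb ↦ ?_).trans ?_
  · exact hg.pow_eq_pow_iff_modEq.mp ((mem_filter.mp ha).2.trans (mem_filter.mp hb).2.symm)
  · exact mul_le_mul_of_nonneg_left (by linarith) (Nat.cast_nonneg _)

theorem exists_card_pow_sq_eq_le : ∃ C > 0, ∀ {G : Type*} [Monoid G] [DecidableEq G] {g : G},
    IsOfFinOrder g → ∀ {M : ℕ}, orderOf g ≤ M ^ 2 → ∀ c : G,
      (#{m ∈ range M | g ^ m ^ 2 = c} : ℝ) ≤ C * M * (orderOf g : ℝ) ^ (-(1 / 4) : ℝ) := by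
  obtain ⟨C, hC, hdiv⟩ := exists_card_divisors_le_rpow (ε := 1 / 4) (by norm_num)
  refine ⟨4 * C, by positivity, fun {G} _ _ {g} hg {M} hM c ↦ ?_⟩
  have hk : (0 : ℝ) < orderOf g := mod_cast hg.orderOf_pos
  calc _ ≤ (#(orderOf g).divisors : ℝ) * (4 * (M / √(orderOf g))) := card_pow_sq_eq_le hg hM c
    _ ≤ C * (orderOf g : ℝ) ^ (1 / 4 : ℝ) * (4 * (M / √(orderOf g))) := by
        gcongr
        exact hdiv _
    _ = 4 * C * M * ((orderOf g : ℝ) ^ (1 / 4 : ℝ) / √(orderOf g)) := by ring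
    _ = 4 * C * M * (orderOf g : ℝ) ^ (-(1 / 4) : ℝ) := by
        rw [Real.sqrt_eq_rpow, ← Real.rpow_sub hk]
        norm_num

end SquaresInResidueClasses

section RomanoffSeries

lemma sum_inv_le_sum_inv_filter_add_one {A : Finset ℕ} {K : ℕ} (hA : #A ≤ K) :
    ∑ n ∈ A, (1 / n : ℝ) ≤ ∑ n ∈ A with n ≤ K, (1 / n : ℝ) + 1 := by
  rw [← sum_filter_add_sum_filter_not A (· ≤ K)]
  gcongr
  calc ∑ n ∈ A with ¬ n ≤ K, (1 / n : ℝ) ≤ #{n ∈ A | ¬ n ≤ K} • (1 / K : ℝ) := by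
        refine sum_le_card_nsmul _ _ _ fun n hn ↦ ?_
        rcases K.eq_zero_or_pos with rfl | hK
        · rw [card_eq_zero.mp (Nat.le_zero.mp hA)] at hn
          simp at hn
        · have : K ≤ n := (not_le.mp (mem_filter.mp hn).2).le
          gcongr
    _ ≤ K * (1 / K : ℝ) := by
        rw [nsmul_eq_mul]
        gcongr
        exact (card_le_card (filter_subset _ _)).trans hA
    _ ≤ 1 := by
        rw [mul_one_div]
        exact div_self_le_one _

lemma sum_inv_le_log_add_two {A : Finset ℕ} {K : ℕ} (hA : #A ≤ K) (hpos : ∀ n ∈ A, n ≠ 0) :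
    ∑ n ∈ A, (1 / n : ℝ) ≤ Real.log K + 2 := by
  calc ∑ n ∈ A, (1 / n : ℝ) ≤ ∑ n ∈ A with n ≤ K, (1 / n : ℝ) + 1 :=
        sum_inv_le_sum_inv_filter_add_one hA
    _ ≤ ∑ n ∈ Icc 1 K, (1 / n : ℝ) + 1 := by
        gcongr
        intro n hn
        obtain ⟨hnA, hnK⟩ := mem_filter.mp hn
        exact mem_Icc.mpr ⟨Nat.one_le_iff_ne_zero.mpr (hpos n hnA), hnK⟩
    _ ≤ 1 + Real.log K + 1 := by
        gcongr
        refine le_of_eq_of_le ?_ (harmonic_le_one_add_log K)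
        rw [harmonic_eq_sum_Icc]
        push_cast
        simp only [one_div]
    _ = Real.log K + 2 := by ring

lemma prod_primesLE_pow_dvd_factorial (n : ℕ) : ∏ p ∈ n.primesLE, p ^ (n / p) ∣ n.factorial := by
  refine prod_dvd_of_isRelPrime (fun p hp q hq hpq ↦ ?_) fun p hp ↦ ?_
  · exact Nat.coprime_iff_isRelPrime.mp (Nat.Coprime.pow _ _ ((Nat.coprime_primes
      (Nat.prime_of_mem_primesLE hp) (Nat.prime_of_mem_primesLE hq)).mpr hpq))
  · rw [(Nat.prime_of_mem_primesLE hp).pow_dvd_factorial_iff (b := Nat.log p n + 2) (by omega)]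
    simpa using single_le_sum (f := fun i ↦ n / p ^ i) (fun _ _ ↦ Nat.zero_le _)
      (mem_Ico.mpr ⟨le_rfl, by omega⟩ : 1 ∈ Ico 1 (Nat.log p n + 2))

/-- The upper bound of Mertens' first theorem. -/
lemma sum_log_div_primesLE_le {n : ℕ} (hn : n ≠ 0) :
    ∑ p ∈ n.primesLE, Real.log p / p ≤ Real.log n + Real.log 4 := by
  have hpos (p : ℕ) (hp : p ∈ n.primesLE) : 0 < p := (Nat.prime_of_mem_primesLE hp).pos
  have hfactorial : ∑ p ∈ n.primesLE, ((n / p : ℕ) : ℝ) * Real.log p ≤ n * Real.log n := by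
    calc ∑ p ∈ n.primesLE, ((n / p : ℕ) : ℝ) * Real.log p
        = Real.log (∏ p ∈ n.primesLE, p ^ (n / p) : ℕ) := by
          push_cast
          rw [Real.log_prod fun p hp ↦ pow_ne_zero _ (Nat.cast_ne_zero.mpr (hpos p hp).ne')]
          simp only [Real.log_pow]
      _ ≤ Real.log (n ^ n : ℕ) := by
          refine Real.log_le_log (mod_cast prod_pos fun p hp ↦ pow_pos (hpos p hp) _) ?_
          exact_mod_cast (Nat.le_of_dvd n.factorial_pos (prod_primesLE_pow_dvd_factorial n)).trans
            n.factorial_le_pow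
      _ = n * Real.log n := by
          push_cast
          exact Real.log_pow n n
  have htheta : ∑ p ∈ n.primesLE, Real.log p ≤ Real.log 4 * n := by
    rw [← Chebyshev.theta_eq_sum_primesLE_log]
    exact Chebyshev.theta_le_log4_mul_x n.cast_nonneg
  refine le_of_mul_le_mul_left ?_ (Nat.cast_pos.mpr (Nat.pos_of_ne_zero hn) : (0 : ℝ) < n)
  calc n * ∑ p ∈ n.primesLE, Real.log p / p
      = ∑ p ∈ n.primesLE, (n / p : ℝ) * Real.log p := by
        rw [mul_sum]
        exact sum_congr rfl fun p _ ↦ by ring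
    _ ≤ ∑ p ∈ n.primesLE, (((n / p : ℕ) : ℝ) + 1) * Real.log p := by
        refine sum_le_sum fun p hp ↦ ?_
        have : (n / p : ℝ) ≤ (n / p : ℕ) + 1 := by
          rw [div_le_iff₀ (mod_cast hpos p hp)]
          exact_mod_cast (Nat.lt_mul_of_div_lt (Nat.lt_succ_self _) (hpos p hp)).le
        gcongr
    _ ≤ n * (Real.log n + Real.log 4) := by
        simp only [add_mul, one_mul, sum_add_distrib]
        linarith

lemma exists_sum_inv_primesLE_le {ε : ℝ} (hε : 0 < ε) :
    ∃ C, ∀ n : ℕ, n ≠ 0 → ∑ p ∈ n.primesLE, (1 / p : ℝ) ≤ C + ε * Real.log n := by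
  set B := ⌈Real.exp (1 / ε)⌉₊
  refine ⟨B + ε * Real.log 4, fun n hn ↦ ?_⟩
  have hterm (p : ℕ) (hp : p ∈ n.primesLE) :
      (1 / p : ℝ) ≤ (if p < B then 1 else 0) + ε * (Real.log p / p) := by
    have hp₁ : (1 : ℝ) ≤ p := mod_cast (Nat.prime_of_mem_primesLE hp).one_le
    have : 0 ≤ Real.log p := Real.log_nonneg hp₁
    split_ifs with hpB
    · have : (1 / p : ℝ) ≤ 1 := (div_le_one (by linarith)).mpr hp₁
      have : 0 ≤ ε * (Real.log p / p) := by positivity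
      linarith
    · have hlogp : 1 / ε ≤ Real.log p := by
        rw [Real.le_log_iff_exp_le (by linarith)]
        exact (Nat.le_ceil _).trans (mod_cast not_lt.mp hpB)
      rw [zero_add, ← mul_div_assoc]
      gcongr
      exact (div_le_iff₀' hε).mp hlogp
  calc ∑ p ∈ n.primesLE, (1 / p : ℝ)
      ≤ #{p ∈ n.primesLE | p < B} + ε * ∑ p ∈ n.primesLE, Real.log p / p := by
        refine (sum_le_sum hterm).trans_eq ?_
        rw [sum_add_distrib, sum_boole, mul_sum]
    _ ≤ B + ε * (Real.log n + Real.log 4) := by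
        gcongr
        · calc #{p ∈ n.primesLE | p < B} ≤ #(range B) :=
                card_le_card fun p hp ↦ mem_range.mpr (mem_filter.mp hp).2
            _ = B := card_range B
        · exact sum_log_div_primesLE_le hn
    _ = B + ε * Real.log 4 + ε * Real.log n := by ring

lemma exists_sum_inv_primes_le {ε : ℝ} (hε : 0 < ε) :
    ∃ C, ∀ (A : Finset ℕ) (K : ℕ), (∀ p ∈ A, p.Prime) → #A ≤ K → K ≠ 0 →
      ∑ p ∈ A, (1 / p : ℝ) ≤ C + ε * Real.log K := by
  obtain ⟨C, hC⟩ := exists_sum_inv_primesLE_le hε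
  refine ⟨C + 1, fun A K hA hcard hK ↦ ?_⟩
  calc ∑ p ∈ A, (1 / p : ℝ) ≤ ∑ p ∈ A with p ≤ K, (1 / p : ℝ) + 1 :=
        sum_inv_le_sum_inv_filter_add_one hcard
    _ ≤ ∑ p ∈ K.primesLE, (1 / p : ℝ) + 1 := by
        gcongr
        intro p hp
        obtain ⟨hpA, hpK⟩ := mem_filter.mp hp
        exact Nat.mem_primesLE.mpr ⟨hpK, hA p hpA⟩
    _ ≤ C + 1 + ε * Real.log K := by linarith [hC K hK]

variable {A : Finset ℕ} {k : ℕ}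

lemma isOfFinOrder_two {p : ℕ} (hp : p.Prime) (hp₂ : p ≠ 2) : IsOfFinOrder (2 : ZMod p) := by
  have := Fact.mk hp
  refine isOfFinOrder_iff_isUnit.mpr ?_
  exact_mod_cast (ZMod.isUnit_iff_coprime 2 p).mpr
    ((Nat.coprime_primes Nat.prime_two hp).mpr hp₂.symm)

/-- Distinct primes with order `k` all divide `2 ^ k - 1`. -/
lemma card_orderOf_two_eq_le (hA : ∀ p ∈ A, p.Prime) (hk : k ≠ 0) :
    #{p ∈ A | orderOf (2 : ZMod p) = k} ≤ k := by
  have hdvd : ∏ p ∈ A with orderOf (2 : ZMod p) = k, p ∣ 2 ^ k - 1 := by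
    refine prod_primes_dvd _ (fun p hp ↦ (hA p (mem_filter.mp hp).1).prime) fun p hp ↦ ?_
    rw [← ZMod.natCast_eq_zero_iff, Nat.cast_sub Nat.one_le_two_pow]
    push_cast
    rw [← (mem_filter.mp hp).2, pow_orderOf_eq_one, sub_self]
  rw [← Nat.pow_le_pow_iff_right one_lt_two]
  calc 2 ^ #{p ∈ A | orderOf (2 : ZMod p) = k}
      ≤ ∏ p ∈ A with orderOf (2 : ZMod p) = k, p :=
        pow_card_le_prod _ _ _ fun p hp ↦ (hA p (mem_filter.mp hp).1).two_le
    _ ≤ 2 ^ k - 1 := Nat.le_of_dvd (Nat.sub_pos_of_lt (Nat.one_lt_two_pow hk)) hdvd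
    _ ≤ 2 ^ k := Nat.sub_le _ _

/-- Primes with order `k` are congruent to `1` modulo `k`. -/
lemma sum_inv_orderOf_two_eq_le (hA : ∀ p ∈ A, p.Prime) (hk : k ≠ 0) :
    ∑ p ∈ A with orderOf (2 : ZMod p) = k, (1 / p : ℝ) ≤ (Real.log k + 2) / k := by
  set A' := {p ∈ A | orderOf (2 : ZMod p) = k}
  have hform (p : ℕ) (hp : p ∈ A') : (p - 1) / k ≠ 0 ∧ p = k * ((p - 1) / k) + 1 := by
    obtain ⟨hpA, hpk⟩ := mem_filter.mp hp
    have hp₁ := (hA p hpA).one_lt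
    have := Fact.mk (hA p hpA)
    have htwo : (2 : ZMod p) ≠ 0 := by
      intro h
      rw [h, orderOf_zero] at hpk
      exact hk hpk.symm
    have hmul := Nat.mul_div_cancel' (hpk ▸ ZMod.orderOf_dvd_card_sub_one htwo : k ∣ p - 1)
    refine ⟨fun h ↦ ?_, by omega⟩
    rw [h, mul_zero] at hmul
    omega
  have hinj : Set.InjOn (fun p ↦ (p - 1) / k) A' := fun p hp q hq hpq ↦ by
    rw [(hform p hp).2, (hform q hq).2]
    exact congrArg (k * · + 1) hpq
  calc ∑ p ∈ A', (1 / p : ℝ) ≤ ∑ p ∈ A', 1 / ((p - 1) / k : ℕ) / (k : ℝ) := by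
        refine sum_le_sum fun p hp ↦ ?_
        obtain ⟨hne, hp_eq⟩ := hform p hp
        rw [div_div]
        refine one_div_le_one_div_of_le (by positivity) ?_
        exact_mod_cast (mul_comm _ k).trans_le ((Nat.le_succ _).trans_eq hp_eq.symm)
    _ = (∑ j ∈ A'.image fun p ↦ (p - 1) / k, (1 / j : ℝ)) / k := by
        rw [sum_div, sum_image hinj]
    _ ≤ (Real.log k + 2) / k := by
        gcongr
        refine sum_inv_le_log_add_two (card_image_le.trans (card_orderOf_two_eq_le hA hk)) ?_
        exact forall_mem_image.mpr fun p hp ↦ (hform p hp).1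

lemma card_orderOf_two_le_le (hA : ∀ p ∈ A, p.Prime ∧ p ≠ 2) :
    #{p ∈ A | orderOf (2 : ZMod p) ≤ k} ≤ k ^ 2 := by
  have hcover : {p ∈ A | orderOf (2 : ZMod p) ≤ k} ⊆
      (Icc 1 k).biUnion fun j ↦ {p ∈ A | orderOf (2 : ZMod p) = j} := fun p hp ↦ by
    obtain ⟨hpA, hpk⟩ := mem_filter.mp hp
    refine mem_biUnion.mpr ⟨_, mem_Icc.mpr ⟨?_, hpk⟩, mem_filter.mpr ⟨hpA, rfl⟩⟩
    exact (isOfFinOrder_two (hA p hpA).1 (hA p hpA).2).orderOf_pos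
  calc _ ≤ #(Icc 1 k) * k := (card_le_card hcover).trans <|
        card_biUnion_le_card_mul _ _ _ fun j hj ↦
          (card_orderOf_two_eq_le (fun p hp ↦ (hA p hp).1)
            (Nat.one_le_iff_ne_zero.mp (mem_Icc.mp hj).1)).trans (mem_Icc.mp hj).2
    _ = k ^ 2 := by rw [Nat.card_Icc, Nat.add_sub_cancel, sq]

lemma exists_exp_sum_inv_orderOf_two_le {ε : ℝ} (hε : 0 < ε) :
    ∃ C > 0, ∀ (A : Finset ℕ) (k : ℕ), (∀ p ∈ A, p.Prime ∧ p ≠ 2) → k ≠ 0 →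
      Real.exp (4 * ∑ p ∈ A with orderOf (2 : ZMod p) ≤ k, (1 / p : ℝ)) ≤ C * (k : ℝ) ^ ε := by
  obtain ⟨C, hC⟩ := exists_sum_inv_primes_le (ε := ε / 8) (by positivity)
  refine ⟨Real.exp (4 * C), Real.exp_pos _, fun A k hA hk ↦ ?_⟩
  have hsum := hC {p ∈ A | orderOf (2 : ZMod p) ≤ k} (k ^ 2)
    (fun p hp ↦ (hA p (mem_filter.mp hp).1).1) (card_orderOf_two_le_le hA) (pow_ne_zero 2 hk)
  rw [Nat.cast_pow, Real.log_pow] at hsum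
  rw [Real.rpow_def_of_pos (Nat.cast_pos.mpr (Nat.pos_of_ne_zero hk)), ← Real.exp_add,
    Real.exp_le_exp]
  push_cast at hsum
  linarith

lemma exists_log_add_two_div_mul_rpow_le {ε : ℝ} (hε : 0 < ε) :
    ∃ C > 0, ∀ k : ℕ, k ≠ 0 →
      (Real.log k + 2) / k * (k : ℝ) ^ (-ε) ≤ C * (k : ℝ) ^ (-(1 + ε / 2)) := by
  refine ⟨2 / ε + 2, by positivity, fun k hk ↦ ?_⟩
  have hk₀ : (0 : ℝ) < k := mod_cast Nat.pos_of_ne_zero hk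
  have hlog : Real.log k + 2 ≤ (2 / ε + 2) * (k : ℝ) ^ (ε / 2) := by
    have h₁ := Real.log_le_rpow_div hk₀.le (half_pos hε)
    have h₂ := Real.one_le_rpow (x := k) (z := ε / 2) (mod_cast Nat.one_le_iff_ne_zero.mpr hk)
      (by positivity)
    calc Real.log k + 2 ≤ (k : ℝ) ^ (ε / 2) / (ε / 2) + 2 * (k : ℝ) ^ (ε / 2) := by linarith
      _ = (2 / ε + 2) * (k : ℝ) ^ (ε / 2) := by
        field_simp
  calc (Real.log k + 2) / k * (k : ℝ) ^ (-ε)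
      ≤ (2 / ε + 2) * (k : ℝ) ^ (ε / 2) / k * (k : ℝ) ^ (-ε) := by gcongr
    _ = (2 / ε + 2) * ((k : ℝ) ^ (ε / 2) * (k : ℝ) ^ (-1 : ℝ) * (k : ℝ) ^ (-ε)) := by
        rw [Real.rpow_neg_one]
        ring
    _ = (2 / ε + 2) * (k : ℝ) ^ (-(1 + ε / 2)) := by
        rw [← Real.rpow_add hk₀, ← Real.rpow_add hk₀]
        ring_nf

/-- Romanoff's theorem on the convergence of `∑ 1 / (p * ord_p(2) ^ ε)`. -/
theorem exists_sum_inv_mul_orderOf_two_rpow_le {ε : ℝ} (hε : 0 < ε) :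
    ∃ C > 0, ∀ A : Finset ℕ, (∀ p ∈ A, p.Prime ∧ p ≠ 2) →
      ∑ p ∈ A, (1 / p : ℝ) * (orderOf (2 : ZMod p) : ℝ) ^ (-ε) ≤ C := by
  obtain ⟨C, hC, hterm⟩ := exists_log_add_two_div_mul_rpow_le hε
  have hsummable : Summable fun k : ℕ ↦ (k : ℝ) ^ (-(1 + ε / 2)) :=
    Real.summable_nat_rpow.mpr (by linarith)
  have htsum : 0 < ∑' k : ℕ, (k : ℝ) ^ (-(1 + ε / 2)) :=
    hsummable.tsum_pos (fun k ↦ by positivity) 1 (by simp)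
  refine ⟨C * ∑' k : ℕ, (k : ℝ) ^ (-(1 + ε / 2)), by positivity, fun A hA ↦ ?_⟩
  set K := A.image fun p ↦ orderOf (2 : ZMod p)
  have hK (k : ℕ) (hk : k ∈ K) : k ≠ 0 := by
    obtain ⟨p, hp, rfl⟩ := mem_image.mp hk
    exact (isOfFinOrder_two (hA p hp).1 (hA p hp).2).orderOf_pos.ne'
  calc ∑ p ∈ A, (1 / p : ℝ) * (orderOf (2 : ZMod p) : ℝ) ^ (-ε)
      = ∑ k ∈ K, (∑ p ∈ A with orderOf (2 : ZMod p) = k, (1 / p : ℝ)) * (k : ℝ) ^ (-ε) := by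
        rw [← sum_fiberwise_of_maps_to (t := K) fun p hp ↦ mem_image_of_mem _ hp]
        refine sum_congr rfl fun k _ ↦ ?_
        rw [sum_mul]
        exact sum_congr rfl fun p hp ↦ by rw [(mem_filter.mp hp).2]
    _ ≤ ∑ k ∈ K, C * (k : ℝ) ^ (-(1 + ε / 2)) := by
        refine sum_le_sum fun k hk ↦ (mul_le_mul_of_nonneg_right ?_ (by positivity)).trans
          (hterm k (hK k hk))
        exact sum_inv_orderOf_two_eq_le (fun p hp ↦ (hA p hp).1) (hK k hk)
    _ ≤ C * ∑' k : ℕ, (k : ℝ) ^ (-(1 + ε / 2)) := by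
        rw [← mul_sum]
        gcongr
        exact hsummable.sum_le_tsum K fun k _ ↦ by positivity

end RomanoffSeries

section Averaging

/-- Order the factors by `o` and telescope: removing the largest index `i` from the exponential
costs at most `w i` times its value. -/
lemma exp_sum_le_one_add_sum {ι β : Type*} [LinearOrder β] {A : Finset ι} {w : ι → ℝ} (o : ι → β)
    (hw : ∀ i ∈ A, 0 ≤ w i) :
    Real.exp (∑ i ∈ A, w i) ≤ 1 + ∑ i ∈ A, w i * Real.exp (∑ j ∈ A with o j ≤ o i, w j) := by
  induction A using induction_on_max_value o with
  | empty => simp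
  | insert a s ha hmax ih =>
    have htop : {j ∈ insert a s | o j ≤ o a} = insert a s :=
      filter_true_of_mem (forall_mem_insert _ _ _ |>.mpr ⟨le_rfl, hmax⟩)
    set E := Real.exp (∑ i ∈ insert a s, w i)
    have hstep : E ≤ Real.exp (∑ i ∈ s, w i) + w a * E := by
      have : Real.exp (∑ i ∈ s, w i) = E * Real.exp (-w a) := by
        rw [← Real.exp_add, sum_insert ha]
        ring_nf
      nlinarith [Real.add_one_le_exp (-w a), Real.exp_pos (∑ i ∈ insert a s, w i)]
    calc E ≤ Real.exp (∑ i ∈ s, w i) + w a * E := hstep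
      _ ≤ 1 + ∑ i ∈ s, w i * Real.exp (∑ j ∈ s with o j ≤ o i, w j) + w a * E := by
          gcongr
          exact ih fun i hi ↦ hw i (mem_insert_of_mem hi)
      _ ≤ 1 + ∑ i ∈ s, w i * Real.exp (∑ j ∈ insert a s with o j ≤ o i, w j) + w a * E := by
          gcongr with i hi
          · exact hw i (mem_insert_of_mem hi)
          · exact fun j hj _ ↦ hw j (mem_filter.mp hj).1
          · exact subset_insert a s
      _ = _ := by
          rw [sum_insert ha, htop]
          ring

lemma oddPrimeRecipSum_le_sum_primesLE_add_one {h K : ℕ} (hh : h ≠ 0) (hK : h ≤ 2 ^ K) :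
    oddPrimeRecipSum h ≤ ∑ p ∈ K.primesLE.erase 2 with p ∣ h, (1 / p : ℝ) + 1 := by
  have hcard : #(h.primeFactors.erase 2) ≤ K := by
    refine (card_le_card (erase_subset _ _)).trans ((Nat.pow_le_pow_iff_right one_lt_two).mp ?_)
    calc 2 ^ #h.primeFactors ≤ ∏ p ∈ h.primeFactors, p :=
          pow_card_le_prod _ _ _ fun p hp ↦ (Nat.prime_of_mem_primeFactors hp).two_le
      _ ≤ h := Nat.le_of_dvd (Nat.pos_of_ne_zero hh) h.prod_primeFactors_dvd
      _ ≤ 2 ^ K := hK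
  refine (sum_inv_le_sum_inv_filter_add_one hcard).trans ?_
  gcongr
  intro p hp
  simp only [mem_filter, mem_erase, Nat.mem_primeFactors, Nat.mem_primesLE] at hp ⊢
  tauto

lemma exists_exp_oddPrimeRecipSum_le :
    ∃ C > 0, ∀ {h K : ℕ}, h ≠ 0 → h ≤ 2 ^ K → Real.exp (4 * oddPrimeRecipSum h) ≤
      C * (1 + ∑ p ∈ K.primesLE.erase 2 with p ∣ h,
        (1 / p : ℝ) * (orderOf (2 : ZMod p) : ℝ) ^ (1 / 8 : ℝ)) := by
  obtain ⟨C, hC, hexp⟩ := exists_exp_sum_inv_orderOf_two_le (ε := 1 / 8) (by norm_num)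
  refine ⟨Real.exp 4 * (1 + 4 * C), by positivity, fun {h K} hh hK ↦ ?_⟩
  set A := {p ∈ K.primesLE.erase 2 | p ∣ h}
  have hA (p : ℕ) (hp : p ∈ A) : p.Prime ∧ p ≠ 2 := by
    have hp' := mem_erase.mp (mem_filter.mp hp).1
    exact ⟨Nat.prime_of_mem_primesLE hp'.2, hp'.1⟩
  set S := ∑ p ∈ A, (1 / p : ℝ) * (orderOf (2 : ZMod p) : ℝ) ^ (1 / 8 : ℝ)
  have hS : 0 ≤ S := sum_nonneg fun p _ ↦ by positivity
  have htelescope : Real.exp (∑ p ∈ A, 4 * (1 / p : ℝ)) ≤ 1 + 4 * C * S := by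
    calc Real.exp (∑ p ∈ A, 4 * (1 / p : ℝ))
        ≤ 1 + ∑ p ∈ A, 4 * (1 / p : ℝ) *
            Real.exp (∑ q ∈ A with orderOf (2 : ZMod q) ≤ orderOf (2 : ZMod p),
              4 * (1 / q : ℝ)) :=
          exp_sum_le_one_add_sum (fun p : ℕ ↦ orderOf (2 : ZMod p)) fun p _ ↦ by positivity
      _ ≤ 1 + ∑ p ∈ A, 4 * (1 / p : ℝ) * (C * (orderOf (2 : ZMod p) : ℝ) ^ (1 / 8 : ℝ)) := by
          gcongr with p hp
          rw [← mul_sum]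
          exact hexp A _ hA (isOfFinOrder_two (hA p hp).1 (hA p hp).2).orderOf_pos.ne'
      _ = 1 + 4 * C * S := by
          rw [mul_sum]
          exact congrArg _ (sum_congr rfl fun p _ ↦ by ring)
  calc Real.exp (4 * oddPrimeRecipSum h)
      ≤ Real.exp (4 * (∑ p ∈ A, (1 / p : ℝ) + 1)) := by
        gcongr
        exact oddPrimeRecipSum_le_sum_primesLE_add_one hh hK
    _ = Real.exp 4 * Real.exp (∑ p ∈ A, 4 * (1 / p : ℝ)) := by
        rw [← Real.exp_add, ← mul_sum]
        ring_nf
    _ ≤ Real.exp 4 * (1 + 4 * C * S) := by gcongr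
    _ ≤ Real.exp 4 * (1 + 4 * C) * (1 + S) := by
        rw [mul_assoc (Real.exp 4)]
        refine mul_le_mul_of_nonneg_left ?_ (Real.exp_pos 4).le
        linarith [mul_nonneg hC.le hS]

theorem exists_sum_exp_oddPrimeRecipSum_le {C₀ : ℝ} (hC₀ : 0 < C₀) :
    ∃ C > 0, ∀ {α : Type*} {X : Finset α} {h : α → ℕ} {K : ℕ} {B : ℝ},
      (∀ x ∈ X, h x ≠ 0 ∧ h x ≤ 2 ^ K) → #X ≤ B →
      (∀ p ∈ K.primesLE.erase 2, (#{x ∈ X | p ∣ h x} : ℝ) ≤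
        C₀ * B * (orderOf (2 : ZMod p) : ℝ) ^ (-(1 / 4) : ℝ)) →
      ∑ x ∈ X, Real.exp (4 * oddPrimeRecipSum (h x)) ≤ C * B := by
  obtain ⟨C₁, hC₁, hexp⟩ := exists_exp_oddPrimeRecipSum_le
  obtain ⟨C₂, hC₂, hseries⟩ := exists_sum_inv_mul_orderOf_two_rpow_le (ε := 1 / 8) (by norm_num)
  refine ⟨C₁ * (1 + C₀ * C₂), by positivity, fun {α X h K B} hX hcard hdvd ↦ ?_⟩
  have hB : 0 ≤ B := (Nat.cast_nonneg _).trans hcard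
  have hA (p : ℕ) (hp : p ∈ K.primesLE.erase 2) : p.Prime ∧ p ≠ 2 :=
    ⟨Nat.prime_of_mem_primesLE (mem_erase.mp hp).2, (mem_erase.mp hp).1⟩
  calc ∑ x ∈ X, Real.exp (4 * oddPrimeRecipSum (h x))
      ≤ ∑ x ∈ X, C₁ * (1 + ∑ p ∈ K.primesLE.erase 2 with p ∣ h x,
          (1 / p : ℝ) * (orderOf (2 : ZMod p) : ℝ) ^ (1 / 8 : ℝ)) :=
        sum_le_sum fun x hx ↦ hexp (hX x hx).1 (hX x hx).2
    _ = C₁ * (#X + ∑ p ∈ K.primesLE.erase 2,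
          (1 / p : ℝ) * (orderOf (2 : ZMod p) : ℝ) ^ (1 / 8 : ℝ) * #{x ∈ X | p ∣ h x}) := by
        simp only [← mul_sum, sum_add_distrib, sum_const, nsmul_eq_mul, mul_one, sum_filter]
        rw [sum_comm]
        simp only [← sum_filter, sum_const, nsmul_eq_mul, mul_comm]
    _ ≤ C₁ * (B + ∑ p ∈ K.primesLE.erase 2,
          (1 / p : ℝ) * (orderOf (2 : ZMod p) : ℝ) ^ (1 / 8 : ℝ) *
            (C₀ * B * (orderOf (2 : ZMod p) : ℝ) ^ (-(1 / 4) : ℝ))) := by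
        gcongr with p hp
        exact hdvd p hp
    _ = C₁ * (B + C₀ * B * ∑ p ∈ K.primesLE.erase 2,
          (1 / p : ℝ) * (orderOf (2 : ZMod p) : ℝ) ^ (-(1 / 8) : ℝ)) := by
        congr 2
        rw [mul_sum]
        refine sum_congr rfl fun p hp ↦ ?_
        have hord : (0 : ℝ) < orderOf (2 : ZMod p) :=
          mod_cast (isOfFinOrder_two (hA p hp).1 (hA p hp).2).orderOf_pos
        rw [show (-(1 / 8) : ℝ) = 1 / 8 + -(1 / 4) by norm_num, Real.rpow_add hord]
        ring
    _ ≤ C₁ * (B + C₀ * B * C₂) := by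
        gcongr
        exact hseries _ hA
    _ = C₁ * (1 + C₀ * C₂) * B := by ring

end Averaging

section SumsOfTwoPowersOfSquares

variable {M t : ℕ}

/-- The set of shifts `2 ^ m₁ ^ 2 + 2 ^ m₂ ^ 2` with distinct `m₁, m₂ < M`. -/
def twoPowSqSums (M : ℕ) : Finset ℕ :=
  (((range M).image (· ^ 2)).powersetCard 2).image fun u ↦ ∑ i ∈ u, 2 ^ i

lemma card_twoPowSqSums (M : ℕ) : #(twoPowSqSums M) = M.choose 2 := by
  rw [twoPowSqSums, card_image_of_injective _ (geomSum_injective le_rfl), card_powersetCard,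
    card_image_of_injective _ (Nat.pow_left_injective two_ne_zero), card_range]

lemma exists_of_mem_twoPowSqSums (ht : t ∈ twoPowSqSums M) :
    ∃ a < M, ∃ b < M, t = 2 ^ a ^ 2 + 2 ^ b ^ 2 := by
  obtain ⟨u, hu, rfl⟩ := mem_image.mp ht
  obtain ⟨hsub, hcard⟩ := mem_powersetCard.mp hu
  obtain ⟨i, j, hij, rfl⟩ := card_eq_two.mp hcard
  obtain ⟨a, ha, rfl⟩ := mem_image.mp (hsub (mem_insert_self i {j}))
  obtain ⟨b, hb, rfl⟩ := mem_image.mp (hsub (mem_insert_of_mem (mem_singleton_self j)))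
  exact ⟨a, mem_range.mp ha, b, mem_range.mp hb, sum_pair hij⟩

lemma two_mul_le_of_mem_twoPowSqSums (ht : t ∈ twoPowSqSums M) : 2 * t ≤ 2 ^ M ^ 2 := by
  have hM : 2 ≤ M := by
    by_contra! hM
    have := card_pos.mpr ⟨t, ht⟩
    rw [card_twoPowSqSums, Nat.choose_eq_zero_of_lt hM] at this
    exact this.false
  obtain ⟨m, rfl⟩ := Nat.exists_eq_add_of_le' hM
  obtain ⟨u, hu, rfl⟩ := mem_image.mp ht
  have hlt : ∑ i ∈ u, 2 ^ i < 2 ^ ((m + 1) ^ 2 + 1) := Nat.geomSum_lt le_rfl fun i hi ↦ by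
    obtain ⟨a, ha, rfl⟩ := mem_image.mp ((mem_powersetCard.mp hu).1 hi)
    have : a ≤ m + 1 := Nat.le_of_lt_succ (mem_range.mp ha)
    exact Nat.lt_succ_of_le (Nat.pow_le_pow_left this 2)
  calc 2 * ∑ i ∈ u, 2 ^ i ≤ 2 * 2 ^ ((m + 1) ^ 2 + 1) := Nat.mul_le_mul_left 2 hlt.le
    _ = 2 ^ ((m + 1) ^ 2 + 2) := by ring
    _ ≤ 2 ^ (m + 2) ^ 2 := Nat.pow_le_pow_right two_pos (by nlinarith)

lemma exists_card_dvd_natAbs_sub_le : ∃ C > 0, ∀ {M p : ℕ}, p.Prime → p ≠ 2 → p ≤ M ^ 2 →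
    (#{z ∈ (twoPowSqSums M).offDiag | p ∣ ((z.1 : ℤ) - z.2).natAbs} : ℝ) ≤
      C * M ^ 4 * (orderOf (2 : ZMod p) : ℝ) ^ (-(1 / 4) : ℝ) := by
  obtain ⟨C, hC, hcount⟩ := exists_card_pow_sq_eq_le.{0}
  refine ⟨C, hC, fun {M p} hp hp₂ hpM ↦ ?_⟩
  have := Fact.mk hp
  have hord : orderOf (2 : ZMod p) ≤ M ^ 2 := by
    refine le_trans ?_ hpM
    exact (orderOf_le_card_univ (x := (2 : ZMod p))).trans_eq (ZMod.card p)
  set solutions : ℕ × ℕ × ℕ → Finset ℕ := fun v ↦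
    {a ∈ range M | (2 : ZMod p) ^ a ^ 2 = 2 ^ v.2.1 ^ 2 + 2 ^ v.2.2 ^ 2 - 2 ^ v.1 ^ 2}
  set V := range M ×ˢ range M ×ˢ range M
  have hcover : {z ∈ (twoPowSqSums M).offDiag | p ∣ ((z.1 : ℤ) - z.2).natAbs} ⊆
      (V.sigma solutions).image fun v ↦
        (2 ^ v.2 ^ 2 + 2 ^ v.1.1 ^ 2, 2 ^ v.1.2.1 ^ 2 + 2 ^ v.1.2.2 ^ 2) := by
    rintro ⟨t, t'⟩ hz
    obtain ⟨hz, hdvd⟩ := mem_filter.mp hz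
    obtain ⟨ht, ht', -⟩ := mem_offDiag.mp hz
    obtain ⟨a, ha, b, hb, rfl⟩ := exists_of_mem_twoPowSqSums ht
    obtain ⟨c, hc, d, hd, rfl⟩ := exists_of_mem_twoPowSqSums ht'
    refine mem_image.mpr ⟨⟨(b, c, d), a⟩, ?_, rfl⟩
    have hmod := (ZMod.intCast_zmod_eq_zero_iff_dvd _ p).mpr (Int.natCast_dvd.mpr hdvd)
    push_cast at hmod
    simp only [V, solutions, mem_sigma, mem_product, mem_range, mem_filter]
    exact ⟨⟨hb, hc, hd⟩, ha, by linear_combination hmod⟩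
  calc _ ≤ ((∑ v ∈ V, #(solutions v) : ℕ) : ℝ) :=
        mod_cast (card_le_card hcover).trans (card_image_le.trans_eq (card_sigma _ _))
    _ ≤ ∑ _v ∈ V, C * M * (orderOf (2 : ZMod p) : ℝ) ^ (-(1 / 4) : ℝ) := by
        push_cast
        gcongr
        exact hcount (isOfFinOrder_two hp hp₂) hord _
    _ = C * M ^ 4 * (orderOf (2 : ZMod p) : ℝ) ^ (-(1 / 4) : ℝ) := by
        simp only [V, sum_const, card_product, card_range, nsmul_eq_mul]
        push_cast
        ring

theorem exists_sum_exp_oddPrimeRecipSum_natAbs_sub_le : ∃ C > 0, ∀ M : ℕ,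
    ∑ z ∈ (twoPowSqSums M).offDiag,
      Real.exp (4 * oddPrimeRecipSum ((z.1 : ℤ) - z.2).natAbs) ≤ C * M ^ 4 := by
  obtain ⟨C₀, hC₀, hdvd⟩ := exists_card_dvd_natAbs_sub_le
  obtain ⟨C, hC, haverage⟩ := exists_sum_exp_oddPrimeRecipSum_le.{0} hC₀
  refine ⟨C, hC, fun M ↦ haverage (K := M ^ 2) (fun z hz ↦ ?_) ?_ fun p hp ↦ ?_⟩
  · obtain ⟨ht, ht', hne⟩ := mem_offDiag.mp hz
    have := two_mul_le_of_mem_twoPowSqSums ht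
    have := two_mul_le_of_mem_twoPowSqSums ht'
    omega
  · have hcard : #(twoPowSqSums M) ≤ M ^ 2 := (card_twoPowSqSums M).trans_le (M.choose_le_pow 2)
    calc (#(twoPowSqSums M).offDiag : ℝ) ≤ (M ^ 2 * M ^ 2 : ℕ) := by
          rw [offDiag_card]
          exact_mod_cast (Nat.sub_le _ _).trans (Nat.mul_le_mul hcard hcard)
      _ = (M : ℝ) ^ 4 := by
          push_cast
          ring
  · obtain ⟨hp₂, hpM⟩ := mem_erase.mp hp
    obtain ⟨hpM, hp⟩ := Nat.mem_primesLE.mp hpM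
    exact hdvd hp hp₂ hpM

end SumsOfTwoPowersOfSquares

section Chebyshev

lemma eventually_le_card_primesLE_half :
    ∀ᶠ x : ℕ in atTop, x / (6 * Real.log x) ≤ (#(x / 2).primesLE : ℝ) := by
  have hlog : ∀ᶠ n : ℕ in atTop, Real.log (n + 1) ≤ 1 / 20 * (n + 1) := by
    filter_upwards [(tendsto_natCast_atTop_atTop.comp (tendsto_add_atTop_nat 1)).eventually
      (Real.isLittleO_log_id_atTop.bound (show (0 : ℝ) < 1 / 20 by norm_num))] with n hn
    have := (le_abs_self _).trans hn
    simp only [Function.comp_apply, Nat.cast_add, Nat.cast_one, id_eq, Real.norm_eq_abs] at this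
    rwa [abs_of_nonneg (by positivity)] at this
  filter_upwards [(Nat.tendsto_div_const_atTop two_ne_zero).eventually hlog,
    eventually_ge_atTop 4] with x hx hx₄
  have hn₂ : (2 : ℝ) ≤ (x / 2 : ℕ) := by
    have : 2 ≤ x / 2 := by omega
    exact_mod_cast this
  have hxn : (x : ℝ) ≤ 3 * (x / 2 : ℕ) := by
    have : x ≤ 3 * (x / 2) := by omega
    exact_mod_cast this
  have hlogn : 0 < Real.log (x / 2 : ℕ) := Real.log_pos (by linarith)
  have hlogle : Real.log (x / 2 : ℕ) ≤ Real.log x :=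
    Real.log_le_log (by linarith) (mod_cast Nat.div_le_self x 2)
  have hnum : (x / 6 : ℝ) ≤ (x / 2 : ℕ) * Real.log 2 - Real.log ((x / 2 : ℕ) + 1) := by
    nlinarith [Real.log_two_gt_d9]
  calc (x : ℝ) / (6 * Real.log x) = x / 6 / Real.log x := by rw [div_div]
    _ ≤ ((x / 2 : ℕ) * Real.log 2 - Real.log ((x / 2 : ℕ) + 1)) / Real.log (x / 2 : ℕ) := by
        gcongr
        exact (by positivity : (0 : ℝ) ≤ x / 6).trans hnum
    _ ≤ Nat.primeCounting (x / 2) := Chebyshev.pi_ge _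
    _ = #(x / 2).primesLE := by rw [Nat.primesLE_card_eq_primeCounting]

lemma eventually_card_primesLE_half_le :
    ∀ᶠ x : ℕ in atTop, (#(x / 2).primesLE : ℝ) ≤ 3 * (x / Real.log x) := by
  have hlog₄ : Real.log 4 = 2 * Real.log 2 := by
    rw [show (4 : ℝ) = 2 ^ 2 by norm_num, Real.log_pow]
    norm_num
  filter_upwards [tendsto_natCast_atTop_atTop.eventually
    (Chebyshev.eventually_primeCounting_le one_pos), eventually_ge_atTop 2] with x hx hx₂
  have hlog : 0 < Real.log x := Real.log_pos (mod_cast hx₂)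
  rw [Nat.floor_natCast] at hx
  calc (#(x / 2).primesLE : ℝ) = Nat.primeCounting (x / 2) := by
        rw [Nat.primesLE_card_eq_primeCounting]
    _ ≤ Nat.primeCounting x := mod_cast Nat.monotone_primeCounting (Nat.div_le_self x 2)
    _ ≤ (Real.log 4 + 1) * x / Real.log x := hx
    _ ≤ 3 * (x / Real.log x) := by
        rw [mul_div_assoc]
        gcongr
        linarith [Real.log_two_lt_d9]

lemma sq_sqrt_log_two_le (x : ℕ) : ((Nat.log 2 x).sqrt : ℝ) ^ 2 ≤ 2 * Real.log x := by
  have hlog : 0 ≤ Real.log x := Real.log_natCast_nonneg x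
  calc ((Nat.log 2 x).sqrt : ℝ) ^ 2 ≤ Nat.log 2 x := mod_cast Nat.sqrt_le' _
    _ ≤ Real.logb 2 x := Real.natLog_le_logb x 2
    _ ≤ 2 * Real.log x := by
        rw [Real.logb, div_le_iff₀ (Real.log_pos one_lt_two)]
        nlinarith [Real.log_two_gt_d9]

lemma log_le_card_twoPowSqSums {x : ℕ} (hx : 2 ^ 4 ≤ x) :
    Real.log x ≤ 9 * #(twoPowSqSums (Nat.log 2 x).sqrt) := by
  set M := (Nat.log 2 x).sqrt
  have hM : (2 : ℝ) ≤ M := by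
    exact_mod_cast Nat.le_sqrt'.mpr (Nat.le_log_of_pow_le one_lt_two hx)
  have hlt : (Nat.log 2 x : ℝ) + 1 ≤ (M + 1 : ℝ) ^ 2 := by
    exact_mod_cast Nat.lt_succ_sqrt' (Nat.log 2 x)
  calc Real.log x ≤ Real.log ((2 : ℝ) ^ (Nat.log 2 x + 1)) := by
        refine Real.log_le_log (by positivity) ?_
        exact_mod_cast (Nat.lt_pow_succ_log_self one_lt_two x).le
    _ = (Nat.log 2 x + 1) * Real.log 2 := by
        rw [Real.log_pow]
        push_cast
        rfl
    _ ≤ (M + 1 : ℝ) ^ 2 * 1 := by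
        gcongr
        linarith [Real.log_two_lt_d9]
    _ ≤ 9 * #(twoPowSqSums M) := by
        rw [card_twoPowSqSums, Nat.cast_choose_two]
        nlinarith

end Chebyshev

section AdditiveEnergy

open scoped Combinatorics.Additive Pointwise

lemma card_add_eq_add_le {P : Finset ℕ} {N : ℕ} (hP : ∀ p ∈ P, p.Prime ∧ p < N) (t t' : ℕ) :
    #{z ∈ P ×ˢ P | z.1 + t = z.2 + t'} ≤
      #{p ∈ range N | p.Prime ∧ (p + ((t : ℤ) - t').natAbs).Prime} := by
  refine card_le_card_of_injOn (fun z ↦ min z.1 z.2) (fun z hz ↦ ?_) fun z hz z' hz' h ↦ ?_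
  · obtain ⟨hz, hadd⟩ := mem_filter.mp hz
    obtain ⟨h₁, h₂⟩ := mem_product.mp hz
    obtain ⟨hp₁, hN₁⟩ := hP _ h₁
    obtain ⟨hp₂, -⟩ := hP _ h₂
    refine mem_filter.mpr ⟨mem_range.mpr ((min_le_left _ _).trans_lt hN₁), ?_⟩
    rcases le_total z.1 z.2 with hle | hle
    · simp only [min_eq_left hle]
      rw [show z.1 + ((t : ℤ) - t').natAbs = z.2 by omega]
      exact ⟨hp₁, hp₂⟩
    · simp only [min_eq_right hle]
      rw [show z.2 + ((t : ℤ) - t').natAbs = z.1 by omega]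
      exact ⟨hp₂, hp₁⟩
  · have := (mem_filter.mp hz).2
    have := (mem_filter.mp hz').2
    simp only at h
    exact Prod.ext (by omega) (by omega)

lemma addEnergy_primes_le {P : Finset ℕ} {N : ℕ} (hP : ∀ p ∈ P, p.Prime ∧ p < N) (T : Finset ℕ) :
    E[P, T] ≤ #P * #T + ∑ z ∈ T.offDiag,
      #{p ∈ range N | p.Prime ∧ (p + ((z.1 : ℤ) - z.2).natAbs).Prime} := by
  have hdiag (t : ℕ) : #{z ∈ P ×ˢ P | z.1 + t = z.2 + t} ≤ #P :=
    card_le_card_of_injOn Prod.fst (fun z hz ↦ (mem_product.mp (mem_filter.mp hz).1).1)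
      fun z hz z' hz' h ↦ by
        have := (mem_filter.mp hz).2
        have := (mem_filter.mp hz').2
        exact Prod.ext h (by omega)
  calc E[P, T] = ∑ z ∈ T ×ˢ T, #{y ∈ P ×ˢ P | y.1 + z.1 = y.2 + z.2} := by
        simp only [addEnergy, card_filter]
        rw [sum_product_right]
    _ = ∑ t ∈ T, #{y ∈ P ×ˢ P | y.1 + t = y.2 + t} +
          ∑ z ∈ T.offDiag, #{y ∈ P ×ˢ P | y.1 + z.1 = y.2 + z.2} := by
        rw [← diag_union_offDiag, sum_union (disjoint_diag_offDiag T), sum_diag]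
    _ ≤ #P * #T + ∑ z ∈ T.offDiag,
          #{p ∈ range N | p.Prime ∧ (p + ((z.1 : ℤ) - z.2).natAbs).Prime} := by
        gcongr with z
        · exact (sum_le_card_nsmul T _ _ fun t _ ↦ hdiag t).trans_eq (mul_comm _ _)
        · exact card_add_eq_add_le hP z.1 z.2

lemma eventually_card_primesLE_mul_card_twoPowSqSums_le : ∀ᶠ x : ℕ in atTop,
    (#(x / 2).primesLE * #(twoPowSqSums (Nat.log 2 x).sqrt) : ℝ) ≤ 6 * x := by
  filter_upwards [eventually_card_primesLE_half_le, eventually_ge_atTop 2] with x hcard hx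
  have hlog : 0 < Real.log x := Real.log_pos (mod_cast hx)
  calc (#(x / 2).primesLE * #(twoPowSqSums (Nat.log 2 x).sqrt) : ℝ)
      ≤ 3 * (x / Real.log x) * (2 * Real.log x) := by
        gcongr
        refine le_trans ?_ (sq_sqrt_log_two_le x)
        exact_mod_cast (card_twoPowSqSums _).trans_le (Nat.choose_le_pow _ 2)
    _ = 6 * x := by
        field_simp
        norm_num

lemma exists_sum_card_prime_pair_le : ∃ C > 0, ∀ᶠ x : ℕ in atTop,
    ∑ z ∈ (twoPowSqSums (Nat.log 2 x).sqrt).offDiag,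
      (#{p ∈ range x | p.Prime ∧ (p + ((z.1 : ℤ) - z.2).natAbs).Prime} : ℝ) ≤ C * x := by
  obtain ⟨C₁, hC₁, hsieve⟩ := exists_card_prime_pair_le
  obtain ⟨C₂, hC₂, haverage⟩ := exists_sum_exp_oddPrimeRecipSum_natAbs_sub_le
  refine ⟨4 * C₁ * C₂, by positivity, ?_⟩
  filter_upwards [hsieve, eventually_ge_atTop 2] with x hpair hx
  set M := (Nat.log 2 x).sqrt
  have hlog : 0 < Real.log x := Real.log_pos (mod_cast hx)
  calc _ ≤ ∑ z ∈ (twoPowSqSums M).offDiag, C₁ * (x / Real.log x ^ 2) *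
          Real.exp (4 * oddPrimeRecipSum ((z.1 : ℤ) - z.2).natAbs) := by
        refine sum_le_sum fun z hz ↦ hpair _ ?_
        have := (mem_offDiag.mp hz).2.2
        omega
    _ ≤ C₁ * (x / Real.log x ^ 2) * (C₂ * (2 * Real.log x) ^ 2) := by
        rw [← mul_sum]
        refine mul_le_mul_of_nonneg_left ((haverage M).trans ?_) (by positivity)
        rw [show (M : ℝ) ^ 4 = (M ^ 2) ^ 2 by ring]
        gcongr
        exact sq_sqrt_log_two_le x
    _ = 4 * C₁ * C₂ * x := by
        field_simp
        norm_num

theorem exists_addEnergy_primesLE_twoPowSqSums_le : ∃ C > 0, ∀ᶠ x : ℕ in atTop,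
    (E[(x / 2).primesLE, twoPowSqSums (Nat.log 2 x).sqrt] : ℝ) ≤ C * x := by
  obtain ⟨C, hC, hoffDiag⟩ := exists_sum_card_prime_pair_le
  refine ⟨6 + C, by positivity, ?_⟩
  filter_upwards [hoffDiag, eventually_card_primesLE_mul_card_twoPowSqSums_le,
    eventually_ge_atTop 1] with x hoff hdiag hx
  have hprimes (p : ℕ) (hp : p ∈ (x / 2).primesLE) : p.Prime ∧ p < x := by
    obtain ⟨hle, hp⟩ := Nat.mem_primesLE.mp hp
    exact ⟨hp, by omega⟩
  have henergy := addEnergy_primes_le hprimes (twoPowSqSums (Nat.log 2 x).sqrt)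
  rw [← Nat.cast_le (α := ℝ)] at henergy
  push_cast at henergy
  linarith

lemma eventually_le_card_primesLE_mul_card_twoPowSqSums : ∀ᶠ x : ℕ in atTop,
    (x / 54 : ℝ) ≤ #(x / 2).primesLE * #(twoPowSqSums (Nat.log 2 x).sqrt) := by
  filter_upwards [eventually_le_card_primesLE_half, eventually_ge_atTop (2 ^ 4)] with x hprimes hx
  have hlog : 0 < Real.log x := Real.log_pos (mod_cast (by norm_num : 1 < 2 ^ 4).trans_le hx)
  calc (x / 54 : ℝ) = x / (6 * Real.log x) * (Real.log x / 9) := by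
        field_simp
        norm_num
    _ ≤ _ := by
        gcongr
        linarith [log_le_card_twoPowSqSums hx]

theorem exists_le_card_primesLE_add_twoPowSqSums : ∃ c > 0, ∀ᶠ x : ℕ in atTop,
    c * x ≤ (#((x / 2).primesLE + twoPowSqSums (Nat.log 2 x).sqrt) : ℝ) := by
  obtain ⟨C, hC, henergy⟩ := exists_addEnergy_primesLE_twoPowSqSums_le
  refine ⟨1 / (54 ^ 2 * C), by positivity, ?_⟩
  filter_upwards [henergy, eventually_le_card_primesLE_mul_card_twoPowSqSums,
    eventually_gt_atTop 0] with x henergy_le hle_card hx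
  have hx_pos : (0 : ℝ) < x := mod_cast hx
  set P := (x / 2).primesLE
  set T := twoPowSqSums (Nat.log 2 x).sqrt
  have hcard_sq : (x / 54 : ℝ) ^ 2 ≤ #(P + T) * (C * x) := by
    calc (x / 54 : ℝ) ^ 2 ≤ (#P * #T : ℝ) ^ 2 := by gcongr
      _ ≤ (#(P + T) : ℝ) * (E[P, T] : ℝ) := by
        rw [mul_pow]
        exact_mod_cast le_card_add_mul_addEnergy P T
      _ ≤ #(P + T) * (C * x) := by gcongr
  rw [div_mul_eq_mul_div, one_mul, div_le_iff₀ (by positivity)]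
  exact le_of_mul_le_mul_right (by linarith) hx_pos

lemma primesLE_add_twoPowSqSums_subset (x : ℕ) :
    (x / 2).primesLE + twoPowSqSums (Nat.log 2 x).sqrt ⊆ (Icc 1 x).filter
      (fun n => ∃ p m₁ m₂ : ℕ, p.Prime ∧ n = p + 2 ^ (m₁ ^ 2) + 2 ^ (m₂ ^ 2)) := by
  refine add_subset_iff.mpr fun p hpP t ht ↦ ?_
  obtain ⟨hpx, hp⟩ := Nat.mem_primesLE.mp hpP
  have hx : x ≠ 0 := by
    rintro rfl
    exact hp.ne_zero (Nat.le_zero.mp hpx)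
  have htx : 2 * t ≤ x := by
    calc 2 * t ≤ 2 ^ (Nat.log 2 x).sqrt ^ 2 := two_mul_le_of_mem_twoPowSqSums ht
      _ ≤ 2 ^ Nat.log 2 x := Nat.pow_le_pow_right two_pos (Nat.sqrt_le' _)
      _ ≤ x := Nat.pow_log_le_self 2 hx
  have := hp.pos
  refine mem_filter.mpr ⟨mem_Icc.mpr ⟨by omega, by omega⟩, ?_⟩
  obtain ⟨a, -, b, -, rfl⟩ := exists_of_mem_twoPowSqSums ht
  exact ⟨p, a, b, hp, by ring⟩

end AdditiveEnergy

end Romanoff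

/-- The set of natural numbers representable as `p + 2^(m₁²) + 2^(m₂²)` with `p` prime
and `m₁, m₂` natural numbers has positive lower asymptotic density: there are `c > 0`
and `x₀` such that for all `x ≥ x₀`, the number of `n ≤ x` of this form is at least `c·x`. -/
theorem romanoff_type_positive_lower_density :
    ∃ c : ℝ, 0 < c ∧ ∃ x₀ : ℕ, ∀ x : ℕ, x₀ ≤ x →
      c * x ≤ ((Finset.Icc 1 x).filter
        (fun n => ∃ p m₁ m₂ : ℕ, p.Prime ∧ n = p + 2 ^ (m₁ ^ 2) + 2 ^ (m₂ ^ 2))).card := by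
  obtain ⟨c, hc, hdensity⟩ := Romanoff.exists_le_card_primesLE_add_twoPowSqSums
  obtain ⟨x₀, hx₀⟩ := Filter.eventually_atTop.mp hdensity
  refine ⟨c, hc, x₀, fun x hx ↦ (hx₀ x hx).trans ?_⟩
  exact_mod_cast Finset.card_le_card (Romanoff.primesLE_add_twoPowSqSums_subset x)
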